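/- arXiv:2108.11210 — 5 statements merged into one kernel-verified Lean document; each statement's English description precedes it below -/
import Mathlib

section
/- Let m ∈ {2,3,4,...}, q = m − 3/2, and let β > 0 be fixed. Define A_m = (−1)^{m+1}/(m! Γ(−1/2)), P_{m,k} = (2/β)^k (m−1/2)_k/(k! (m+1)_k), p_{m,k} = Σ_{j: 2j ≤ k} τ_{2j} P_{m,k−2j}, and q_{m,0} = ln(2/β) + ψ(m−1/2) − ψ(1) − ψ(m+1), where ψ = Γ'/Γ is the digamma function. Define F^{(R)}(η,β) = Σ_{j=0}^{m−1} (−1)^j ((−1/2)_j/j!) (2/β)^{j−1/2} F_{m−j−1}(η), and F^{(S)}(η,β) = (√π/2) (2/β)^{m−1/2} (−1)^m Σ_{n=1}^∞ (−1)^n e^{−nη − 2n/β} U(3/2, m+1, 2n/β), where U(3/2, m+1, z) = (1/Γ(3/2)) ∫_0^∞ e^{−zt} t^{1/2} (1+t)^{m−3/2} dt. Then for every integer N ≥ 1, as η → +∞, F_q(η,β) − F^{(R)}(η,β) − F^{(S)}(η,β) − Γ(m−1/2) (2/β)^{m−1/2} A_m ( −(γ + ln η) p_{m,0} + q_{m,0}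 + Σ_{k=1}^{N−1} (−1)^k p_{m,k} (k−1)! η^{−k} ) = O(η^{−N}), where γ is Euler's constant. -/
open Real MeasureTheory Set Finset Filter Asymptotics

/-- The relativistic Fermi-Dirac integral. -/
noncomputable def Frel (q η β : ℝ) : ℝ :=
  ∫ x in Ioi (0 : ℝ), x ^ q * Real.sqrt (1 + β * x / 2) / (Real.exp (x - η) + 1)

/-- The standard Fermi-Dirac integral. -/
noncomputable def Fstd (q η : ℝ) : ℝ :=
  ∫ x in Ioi (0 : ℝ), x ^ q / (Real.exp (x - η) + 1)

/-- The coefficients `τ_{2j}`: `τ_0 = 1` and `τ_{2j} = 2(1 − 2^{1−2j}) ζ(2j)` for `j ≥ 1`. -/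
noncomputable def tau2 (j : ℕ) : ℂ :=
  if j = 0 then 1 else 2 * (1 - (2 : ℂ) ^ (1 - 2 * (j : ℤ))) * riemannZeta (2 * j)

/-- `A_m = (−1)^{m+1}/(m! Γ(−1/2))`. -/
noncomputable def Acoef (m : ℕ) : ℝ :=
  (-1 : ℝ) ^ (m + 1) / (m.factorial * Real.Gamma (-1 / 2))

/-- `P_{m,k} = (2/β)^k (m−1/2)_k/(k! (m+1)_k)`. -/
noncomputable def Pcoef (m k : ℕ) (β : ℝ) : ℝ :=
  (2 / β) ^ k * (ascPochhammer ℝ k).eval ((m : ℝ) - 1 / 2) /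
    (k.factorial * (ascPochhammer ℝ k).eval ((m : ℝ) + 1))

/-- `p_{m,k} = Σ_{j : 2j ≤ k} τ_{2j} P_{m,k−2j}`. -/
noncomputable def pcoef (m k : ℕ) (β : ℝ) : ℂ :=
  ∑ j ∈ Finset.range (k / 2 + 1), tau2 j * ((Pcoef m (k - 2 * j) β : ℝ) : ℂ)

/-- The digamma function `ψ = Γ'/Γ`. -/
noncomputable def digamma (x : ℝ) : ℝ := deriv Real.Gamma x / Real.Gamma x

/-- `q_{m,0} = ln(2/β) + ψ(m−1/2) − ψ(1) − ψ(m+1)`. -/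
noncomputable def q0coef (m : ℕ) (β : ℝ) : ℝ :=
  Real.log (2 / β) + digamma ((m : ℝ) - 1 / 2) - digamma 1 - digamma ((m : ℝ) + 1)

/-- `F^{(R)}(η,β)`. -/
noncomputable def FR (m : ℕ) (β η : ℝ) : ℝ :=
  ∑ j ∈ Finset.range m, (-1 : ℝ) ^ j *
    ((ascPochhammer ℝ j).eval (-1 / 2 : ℝ) / j.factorial) *
      (2 / β) ^ ((j : ℝ) - 1 / 2) * Fstd ((m : ℝ) - j - 1) η

/-- `U(3/2, m+1, z)` defined by its integral representation. -/
noncomputable def Ubig (m : ℕ) (z : ℝ) : ℝ :=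
  (1 / Real.Gamma (3 / 2)) *
    ∫ t in Ioi (0 : ℝ), Real.exp (-z * t) * t ^ ((1 : ℝ) / 2) * (1 + t) ^ ((m : ℝ) - 3 / 2)

/-- `F^{(S)}(η,β)` (the series starts at `n = 1`, here re-indexed by `n + 1`). -/
noncomputable def FS (m : ℕ) (β η : ℝ) : ℝ :=
  (Real.sqrt π / 2) * (2 / β) ^ ((m : ℝ) - 1 / 2) * (-1 : ℝ) ^ m *
    ∑' n : ℕ, (-1 : ℝ) ^ (n + 1) *
      Real.exp (-((n : ℝ) + 1) * η - 2 * ((n : ℝ) + 1) / β) * Ubig m (2 * ((n : ℝ) + 1) / β)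

/-!
Subtracting from `x^{m-3/2} √(1 + βx/2)` the nonnegative powers in its expansion at infinity removes
`F^{(R)}` and leaves a remainder of order `1/x`, whose primitive `G` vanishing at `0` has a
logarithmic expansion at infinity; its constant term carries the digamma values. Integrating by
parts against the Fermi factor turns the remaining integral into `∫ G(η - t) w(t) dt`, where
`w` is minus the derivative of the Fermi factor. Up to `O(η^{-N})` one may expand `G(η - t)` in
powers of `t/η` under the integral, so the coefficients of `G` are convolved with the moments of
`w`. The odd moments vanish and the even ones are `(2j)! τ_{2j}`, which produces `p_{m,k}`. Finally,
`F^{(S)}` is exponentially small.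
-/

/-! ### The Fermi kernel and its moments -/

/-- The Fermi kernel `w(t) = 1 / ((1 + e^t)(1 + e^{-t}))`, minus the derivative of the Fermi
factor `x ↦ 1 / (e^x + 1)`. -/
noncomputable def fermiKernel (t : ℝ) : ℝ := sigmoid t * sigmoid (-t)

lemma fermiKernel_nonneg (t : ℝ) : 0 ≤ fermiKernel t :=
  mul_nonneg (sigmoid_nonneg _) (sigmoid_nonneg _)

lemma fermiKernel_neg (t : ℝ) : fermiKernel (-t) = fermiKernel t := by
  rw [fermiKernel, fermiKernel, neg_neg, mul_comm]

lemma continuous_fermiKernel : Continuous fermiKernel :=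
  continuous_sigmoid.mul (continuous_sigmoid.comp continuous_neg)

lemma hasDerivAt_sigmoid_fermiKernel (t : ℝ) : HasDerivAt sigmoid (fermiKernel t) t := by
  simpa only [fermiKernel, sigmoid_neg] using hasDerivAt_sigmoid t

lemma sigmoid_neg_le_exp_neg (t : ℝ) : sigmoid (-t) ≤ exp (-t) := by
  rw [← sigmoid_mul_rexp_neg]
  exact mul_le_of_le_one_left (exp_pos _).le (sigmoid_le_one t)

lemma fermiKernel_le_exp_neg_abs (t : ℝ) : fermiKernel t ≤ exp (-|t|) := by
  wlog ht : 0 ≤ t generalizing t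
  · simpa only [fermiKernel_neg, abs_neg] using this (-t) (by linarith)
  rw [abs_of_nonneg ht]
  exact (mul_le_of_le_one_left (sigmoid_nonneg _) (sigmoid_le_one t)).trans
    (sigmoid_neg_le_exp_neg t)

lemma integrable_comp_abs {f : ℝ → ℝ} (hf : IntegrableOn f (Ioi 0)) :
    Integrable fun x => f |x| := by
  have hneg : IntegrableOn (fun x => f |x|) (Iio 0) :=
    (IntegrableOn.comp_neg_Iio (by simpa using hf)).congr_fun
      (fun x hx => by rw [abs_of_neg hx]) measurableSet_Iio
  have hpos : IntegrableOn (fun x => f |x|) (Ioi 0) :=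
    hf.congr_fun (fun x hx => by rw [abs_of_pos hx]) measurableSet_Ioi
  rw [← integrableOn_univ, ← Iio_union_Ici (a := (0 : ℝ))]
  exact hneg.union (Iff.mpr integrableOn_Ici_iff_integrableOn_Ioi hpos)

lemma integrable_pow_mul_fermiKernel (n : ℕ) : Integrable fun t : ℝ => t ^ n * fermiKernel t := by
  have hexp : IntegrableOn (fun t : ℝ => exp (-t) * t ^ n) (Ioi 0) := by
    simpa using Real.GammaIntegral_convergent (Nat.cast_add_one_pos n : (0 : ℝ) < n + 1)
  refine (integrable_comp_abs hexp).mono'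
    ((continuous_pow n).mul continuous_fermiKernel).aestronglyMeasurable (.of_forall fun t => ?_)
  rw [norm_mul, norm_pow, norm_eq_abs, norm_of_nonneg (fermiKernel_nonneg t), mul_comm]
  gcongr
  exact fermiKernel_le_exp_neg_abs t

/-- The `n`-th moment of the Fermi kernel; these are the second factors of the convolved
coefficients in the asymptotic expansion of a Fermi-Dirac type integral. -/
noncomputable def fermiMoment (n : ℕ) : ℝ := ∫ t : ℝ, t ^ n * fermiKernel t

lemma fermiMoment_zero : fermiMoment 0 = 1 := by
  have h := integral_of_hasDerivAt_of_tendsto hasDerivAt_sigmoid_fermiKernel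
    (by simpa using integrable_pow_mul_fermiKernel 0) tendsto_sigmoid_atBot tendsto_sigmoid_atTop
  simpa [fermiMoment] using h

lemma fermiMoment_of_odd {n : ℕ} (hn : Odd n) : fermiMoment n = 0 := by
  have h := integral_neg_eq_self (fun t : ℝ => t ^ n * fermiKernel t) volume
  simp only [hn.neg_pow, fermiKernel_neg, neg_mul, integral_neg] at h
  rw [fermiMoment]
  linarith

lemma hasSum_neg_one_pow_div_cpow {s : ℂ} (hs : 1 < s.re) :
    HasSum (fun n : ℕ => (-1 : ℂ) ^ n / (n : ℂ) ^ s) ((2 ^ (1 - s) - 1) * riemannZeta s) := by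
  have hζ : HasSum (fun n : ℕ => 1 / (n : ℂ) ^ s) (riemannZeta s) :=
    zeta_eq_tsum_one_div_nat_cpow hs ▸ (Complex.summable_one_div_nat_cpow.2 hs).hasSum
  have heven : HasSum (fun n : ℕ => if Even n then 2 / (n : ℂ) ^ s else 0)
      (2 ^ (1 - s) * riemannZeta s) := by
    rw [← (mul_right_injective₀ (two_ne_zero (α := ℕ))).hasSum_iff]
    · refine (hζ.mul_left _).congr_fun fun n => ?_
      simp only [Function.comp_apply, even_two_mul, if_true]
      rw [Nat.cast_mul, Complex.natCast_mul_natCast_cpow, Complex.cpow_sub _ _ two_ne_zero,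
        Complex.cpow_one, Nat.cast_two]
      ring
    · intro n hn
      refine if_neg fun h => hn ?_
      obtain ⟨k, hk⟩ := even_iff_exists_two_mul.1 h
      exact ⟨k, hk.symm⟩
  rw [sub_one_mul]
  refine (heven.sub hζ).congr_fun fun n => ?_
  rcases Nat.even_or_odd n with h | h
  · rw [if_pos h, h.neg_one_pow]
    ring
  · rw [if_neg (Nat.not_even_iff_odd.2 h), h.neg_one_pow]
    ring

lemma hasSum_fermiKernel {t : ℝ} (ht : 0 < t) :
    HasSum (fun n : ℕ => -((-1) ^ n * n) * exp (-n * t)) (fermiKernel t) := by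
  have hr : ‖-exp (-t)‖ < 1 := by
    rw [norm_neg, norm_of_nonneg (exp_pos _).le]
    exact Real.exp_lt_one_iff.2 (neg_lt_zero.2 ht)
  have hsum : -(-exp (-t) / (1 - -exp (-t)) ^ 2) = fermiKernel t := by
    rw [fermiKernel, ← sigmoid_mul_rexp_neg, sigmoid_def, sub_neg_eq_add]
    field_simp
  refine (hsum ▸ (hasSum_coe_mul_geometric_of_norm_lt_one hr).neg).congr_fun fun n => ?_
  rw [neg_pow (exp (-t)), ← exp_nat_mul, mul_neg, neg_mul (n : ℝ)]
  ring

lemma mellin_fermiKernel {s : ℂ} (hs : 2 < s.re) :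
    mellin (fun t => (fermiKernel t : ℂ)) s =
      Complex.Gamma s * ((1 - 2 ^ (2 - s)) * riemannZeta (s - 1)) := by
  have hη : HasSum (fun n : ℕ => Complex.Gamma s * (-((-1) ^ n * n)) / ((n : ℝ) : ℂ) ^ s)
      (-Complex.Gamma s * ((2 ^ (1 - (s - 1)) - 1) * riemannZeta (s - 1))) := by
    have hre : 1 < (s - 1).re := by
      rw [Complex.sub_re, Complex.one_re]
      linarith
    refine ((hasSum_neg_one_pow_div_cpow hre).mul_left (-Complex.Gamma s)).congr_fun fun n => ?_
    rcases eq_or_ne n 0 with rfl | hn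
    · simp [Complex.zero_cpow (Complex.ne_zero_of_one_lt_re hre)]
    · have hn' : (n : ℂ) ≠ 0 := Nat.cast_ne_zero.2 hn
      rw [Complex.cpow_sub _ _ hn', Complex.cpow_one, Complex.ofReal_natCast]
      field_simp
  have hmellin := hasSum_mellin (a := fun n : ℕ => -((-1) ^ n * n)) (p := fun n => n)
    (F := fun t => (fermiKernel t : ℂ)) (s := s) (fun n => ?_) (by linarith) (fun t ht => ?_) ?_
  · rw [hmellin.unique hη]
    ring_nf
  · rcases eq_or_ne n 0 with rfl | hn
    · simp
    · exact .inr (Nat.cast_pos.2 (Nat.pos_of_ne_zero hn))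
  · simpa using (Complex.hasSum_ofReal.2 (hasSum_fermiKernel ht))
  · refine (Real.summable_nat_rpow.2 (by linarith : 1 - s.re < -1)).congr fun n => ?_
    rcases eq_or_ne n 0 with rfl | hn
    · simp [zero_rpow (by linarith : (1 : ℝ) - s.re ≠ 0), zero_rpow (by linarith : s.re ≠ 0)]
    · rw [rpow_sub (by positivity), rpow_one]
      simp

lemma fermiMoment_eq_two_mul_mellin (j : ℕ) :
    (fermiMoment (2 * j) : ℂ) = 2 * mellin (fun t => (fermiKernel t : ℂ)) (2 * j + 1) := by
  have heven : fermiMoment (2 * j) = 2 * ∫ t in Ioi (0 : ℝ), t ^ (2 * j) * fermiKernel t := by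
    rw [← integral_comp_abs, fermiMoment]
    refine integral_congr_ae (.of_forall fun t => ?_)
    rcases abs_choice t with h | h <;> simp [h, fermiKernel_neg]
  rw [heven, mellin, Complex.ofReal_mul, ← integral_complex_ofReal, Complex.ofReal_ofNat]
  congr 1
  refine setIntegral_congr_fun measurableSet_Ioi fun t _ => ?_
  simp only [add_sub_cancel_right, smul_eq_mul, Complex.ofReal_mul, Complex.ofReal_pow]
  norm_cast

lemma fermiMoment_two_mul (j : ℕ) :
    (fermiMoment (2 * j) : ℂ) = (2 * j).factorial * tau2 j := by
  rcases eq_or_ne j 0 with rfl | hj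
  · simp [fermiMoment_zero, tau2]
  have hs : 2 < (2 * j + 1 : ℂ).re := by
    norm_cast
    omega
  have hpow : (2 : ℂ) ^ (2 - (2 * j + 1 : ℂ)) = 2 ^ (1 - 2 * (j : ℤ)) := by
    rw [← Complex.cpow_intCast]
    push_cast
    ring_nf
  have hΓ : Complex.Gamma (2 * j + 1) = (2 * j).factorial := by
    exact_mod_cast Complex.Gamma_nat_eq_factorial (2 * j)
  rw [fermiMoment_eq_two_mul_mellin, mellin_fermiKernel hs, hpow, hΓ, tau2, if_neg hj,
    add_sub_cancel_right]
  ring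

/-! ### Logarithmic expansions at infinity -/

/-- The binomial convolution of two sequences, which is the convolution product of their
exponential generating functions. -/
noncomputable def binomialConv (a μ : ℕ → ℝ) (k : ℕ) : ℝ :=
  ∑ p ∈ antidiagonal k, (k.choose p.1 : ℝ) * a p.1 * μ p.2

/-- The partial sum `L + a₀ log x - ∑_{0 < i < N} a_i / (i x^i)` of a logarithmic expansion at
infinity, a termwise primitive of `∑ a_i / x^{i+1}`; the term `i = 0` of the sum vanishes because
division by zero gives zero. -/
noncomputable def logPartialSum (L : ℝ) (a : ℕ → ℝ) (N : ℕ) (x : ℝ) : ℝ :=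
  L + a 0 * log x - ∑ i ∈ range N, a i / (i * x ^ i)

/-- `G` has the asymptotic expansion `L + a₀ log x - ∑_{i ≥ 1} a_i / (i x^i)` at infinity. -/
def HasLogExpansion (G : ℝ → ℝ) (L : ℝ) (a : ℕ → ℝ) : Prop :=
  ∀ N : ℕ, (fun x => G x - logPartialSum L a N x) =O[atTop] fun x => (x ^ N)⁻¹

lemma isBigO_sub_sum_of_hasFPowerSeriesAt {f : ℝ → ℝ} {c : ℕ → ℝ}
    (hf : HasFPowerSeriesAt f (.ofScalars ℝ c) 0) (n : ℕ) :
    (fun x => f x - ∑ i ∈ range n, c i * x ^ i) =O[nhds 0] fun x => x ^ n := by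
  have h := hf.isBigO_sub_partialSum_pow n
  simp only [zero_add, FormalMultilinearSeries.partialSum,
    FormalMultilinearSeries.ofScalars_apply_eq, smul_eq_mul] at h
  exact h.trans (.of_norm_right (by simpa only [norm_pow] using isBigO_refl _ _))

/-- The normalised derivative `φ_i = (1 / i!) (d/dv)^i (-log (1 - v))`, that is `-log (1 - v)` for
`i = 0` and `(1 - v)^{-i} / i` for `i ≥ 1`; up to sign and scaling these are the terms of a
logarithmic expansion evaluated at `η (1 - v)`. -/
noncomputable def negLogTaylor (i : ℕ) (v : ℝ) : ℝ :=
  if i = 0 then -log (1 - v) else ((1 - v) ^ i)⁻¹ / i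

lemma isBigO_negLogTaylor_sub_sum (i n : ℕ) :
    (fun v => negLogTaylor i v - ∑ l ∈ range n, ((i + l).choose i : ℝ) / (i + l) * v ^ l)
      =O[nhds 0] fun v => v ^ n := by
  rcases i with _ | i
  · have h := (isBigO_sub_sum_of_hasFPowerSeriesAt hasFPowerSeriesAt_log_one_add n).comp_tendsto
      (by simpa using tendsto_neg (0 : ℝ) : Tendsto Neg.neg (nhds (0 : ℝ)) (nhds 0))
    refine (h.neg_left.congr_left fun v => ?_).trans_le fun v => ?_
    · simp only [negLogTaylor, Function.comp_apply, if_true, neg_sub', ← sub_eq_add_neg]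
      congr 1
      rw [← Finset.sum_neg_distrib]
      refine Finset.sum_congr rfl fun l _ => ?_
      rw [neg_pow v, zero_add, Nat.choose_zero_right]
      linear_combination (v ^ l / l) * (pow_mul_pow_eq_one l (by norm_num : (-1 : ℝ) * -1 = 1))
    · simp only [Function.comp_apply, norm_pow, norm_neg, le_refl]
  · have h := (isBigO_sub_sum_of_hasFPowerSeriesAt
      (one_div_sub_pow_hasFPowerSeriesOnBall_zero i one_ne_zero).hasFPowerSeriesAt n)
    refine (h.const_mul_left ((i + 1 : ℝ)⁻¹)).congr_left fun v => ?_
    simp only [negLogTaylor, if_neg i.succ_ne_zero, mul_sub, Finset.mul_sum]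
    congr 1
    · push_cast
      field_simp
    · refine Finset.sum_congr rfl fun l _ => ?_
      have hchoose : ((i + l + 1 : ℕ) : ℝ) * (i + l).choose i =
          (i + l + 1).choose (i + 1) * (i + 1 : ℕ) := by
        exact_mod_cast Nat.add_one_mul_choose_eq (i + l) i
      rw [add_right_comm i 1 l]
      push_cast at hchoose ⊢
      field_simp
      linear_combination v ^ l * hchoose

lemma binomialConv_zero (a μ : ℕ → ℝ) : binomialConv a μ 0 = a 0 * μ 0 := by
  simp [binomialConv]

lemma logPartialSum_mul_one_sub (L : ℝ) (a : ℕ → ℝ) (N : ℕ) {η v : ℝ} (hη : 0 < η) (hv : v < 1) :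
    logPartialSum L a (N + 1) (η * (1 - v)) =
      L + a 0 * log η - ∑ i ∈ range (N + 1), a i * η⁻¹ ^ i * negLogTaylor i v := by
  have hterm (i : ℕ) : a (i + 1) * η⁻¹ ^ (i + 1) * negLogTaylor (i + 1) v =
      a (i + 1) / ((i + 1 : ℕ) * (η * (1 - v)) ^ (i + 1)) := by
    rw [negLogTaylor, if_neg i.succ_ne_zero, mul_pow, inv_pow]
    field_simp
  simp only [logPartialSum, Finset.sum_range_succ', hterm]
  rw [log_mul hη.ne' (sub_pos.2 hv).ne', negLogTaylor, if_pos rfl, Nat.cast_zero, zero_mul,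
    div_zero]
  ring

lemma logPartialSum_binomialConv_pow (L : ℝ) (a : ℕ → ℝ) (N : ℕ) {η : ℝ} (hη : 0 < η) (v : ℝ) :
    logPartialSum L (binomialConv a fun l => (η * v) ^ l) N η =
      L + a 0 * log η - ∑ i ∈ range N, a i * η⁻¹ ^ i *
        ∑ l ∈ range (N - i), ((i + l).choose i : ℝ) / (i + l) * v ^ l := by
  simp only [logPartialSum, binomialConv_zero, pow_zero, mul_one, Finset.mul_sum]
  rw [← Finset.sum_range_diag_flip]
  congr 1
  refine Finset.sum_congr rfl fun k _ => ?_
  rw [binomialConv, Finset.Nat.sum_antidiagonal_eq_sum_range_succ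
    (fun i l => (k.choose i : ℝ) * a i * (η * v) ^ l), Finset.sum_div]
  refine Finset.sum_congr rfl fun i hi => ?_
  obtain ⟨l, rfl⟩ := Nat.exists_eq_add_of_le (Finset.mem_range_succ_iff.1 hi)
  rw [add_tsub_cancel_left, mul_pow, pow_add, inv_pow, Nat.cast_add]
  field_simp

lemma isBigO_logPartialSum_shift (L : ℝ) (a : ℕ → ℝ) (N : ℕ) :
    (fun p : ℝ × ℝ => logPartialSum L a (N + 1) (p.1 * (1 - p.2)) -
        logPartialSum L (binomialConv a fun l => (p.1 * p.2) ^ l) (N + 1) p.1)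
      =O[atTop ×ˢ nhds 0] fun p => (p.1⁻¹ + |p.2|) ^ (N + 1) := by
  have hpos : ∀ᶠ p : ℝ × ℝ in atTop ×ˢ nhds 0, 0 < p.1 ∧ p.2 < 1 :=
    (eventually_gt_atTop 0).prod_mk (eventually_lt_nhds one_pos)
  have hterm (i : ℕ) (hi : i ∈ range (N + 1)) : (fun p : ℝ × ℝ => a i * p.1⁻¹ ^ i *
        (negLogTaylor i p.2 - ∑ l ∈ range (N + 1 - i), ((i + l).choose i : ℝ) / (i + l) * p.2 ^ l))
      =O[atTop ×ˢ nhds 0] fun p => (p.1⁻¹ + |p.2|) ^ (N + 1) := by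
    have hφ := (isBigO_negLogTaylor_sub_sum i (N + 1 - i)).comp_tendsto
      (tendsto_snd (f := (atTop : Filter ℝ)))
    refine (((isBigO_refl (fun p : ℝ × ℝ => p.1⁻¹ ^ i) _).const_mul_left (a i)).mul hφ).trans
      (.of_bound 1 ?_)
    filter_upwards [hpos] with p hp
    have hη : 0 ≤ p.1⁻¹ := inv_nonneg.2 hp.1.le
    rw [one_mul, norm_of_nonneg (by positivity : 0 ≤ (p.1⁻¹ + |p.2|) ^ (N + 1)),
      ← Nat.add_sub_of_le (Finset.mem_range.1 hi).le, pow_add, Nat.add_sub_cancel_left, norm_mul,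
      norm_pow, Function.comp_apply, norm_pow, norm_of_nonneg hη, norm_eq_abs]
    gcongr
    · exact le_add_of_nonneg_right (abs_nonneg _)
    · exact le_add_of_nonneg_left hη
  refine (IsBigO.sum hterm).neg_left.congr' ?_ .rfl
  filter_upwards [hpos] with p hp
  rw [logPartialSum_mul_one_sub L a N hp.1 hp.2, logPartialSum_binomialConv_pow L a _ hp.1,
    Finset.sum_apply, sub_sub_sub_cancel_left, ← neg_sub, ← Finset.sum_sub_distrib]
  simp only [mul_sub]

lemma HasLogExpansion.isBigO_shift {G : ℝ → ℝ} {L : ℝ} {a : ℕ → ℝ} (hG : HasLogExpansion G L a)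
    (N : ℕ) :
    (fun p : ℝ × ℝ => G (p.1 * (1 - p.2)) -
        logPartialSum L (binomialConv a fun l => (p.1 * p.2) ^ l) (N + 1) p.1)
      =O[atTop ×ˢ nhds 0] fun p => (p.1⁻¹ + |p.2|) ^ (N + 1) := by
  have hone : Tendsto (fun p : ℝ × ℝ => 1 - p.2) (atTop ×ˢ nhds 0) (nhds 1) := by
    simpa using (tendsto_snd (f := (atTop : Filter ℝ)) (g := nhds (0 : ℝ))).const_sub 1
  have hlim : Tendsto (fun p : ℝ × ℝ => p.1 * (1 - p.2)) (atTop ×ˢ nhds 0) atTop :=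
    tendsto_fst.atTop_mul_pos one_pos hone
  have hgauge : (fun p : ℝ × ℝ => ((p.1 * (1 - p.2)) ^ (N + 1))⁻¹)
      =O[atTop ×ˢ nhds 0] fun p => (p.1⁻¹ + |p.2|) ^ (N + 1) := by
    refine .of_bound (2 ^ (N + 1)) ?_
    filter_upwards [tendsto_fst.eventually (eventually_gt_atTop 0),
      hone.eventually (lt_mem_nhds (by norm_num : (1 : ℝ) / 2 < 1))] with p hη hv
    rw [norm_of_nonneg (by positivity), norm_of_nonneg (by positivity), ← inv_pow, ← mul_pow]
    gcongr
    calc (p.1 * (1 - p.2))⁻¹ ≤ (p.1 * (1 / 2))⁻¹ := by gcongr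
      _ ≤ 2 * (p.1⁻¹ + |p.2|) := by
        rw [mul_inv, one_div, inv_inv, mul_comm]
        gcongr
        exact le_add_of_nonneg_right (abs_nonneg _)
  refine (((hG (N + 1)).comp_tendsto hlim).trans hgauge |>.add
    (isBigO_logPartialSum_shift L a N)).congr_left fun p => ?_
  simp only [Function.comp_apply]
  ring

lemma HasLogExpansion.of_succ {G : ℝ → ℝ} {L : ℝ} {a : ℕ → ℝ}
    (h : ∀ N, (fun x => G x - logPartialSum L a (N + 1) x) =O[atTop] fun x => (x ^ (N + 1))⁻¹) :
    HasLogExpansion G L a := by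
  rintro (_ | N)
  · refine ((h 0).trans (.of_bound 1 ?_)).congr_left fun x => by simp [logPartialSum]
    filter_upwards [eventually_ge_atTop 1] with x hx
    simpa [abs_of_nonneg (zero_le_one.trans hx)] using inv_le_one_of_one_le₀ hx
  · exact h N

lemma abs_binomialConv_pow_le (a : ℕ → ℝ) {N k : ℕ} (hk : k ≤ N) (t : ℝ) :
    |binomialConv a (fun l => t ^ l) k| ≤
      binomialConv (fun i => |a i|) (fun _ => 1) k * (1 + |t|) ^ N := by
  rw [binomialConv, binomialConv, Finset.sum_mul]
  refine (Finset.abs_sum_le_sum_abs _ _).trans (Finset.sum_le_sum fun p hp => ?_)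
  have hl : p.2 ≤ N :=
    (Finset.HasAntidiagonal.mem_antidiagonal.1 hp ▸ Nat.le_add_left _ _ : p.2 ≤ k).trans hk
  rw [abs_mul, abs_mul, Nat.abs_cast, abs_pow, mul_one]
  gcongr
  exact (pow_le_pow_left₀ (abs_nonneg t) (le_add_of_nonneg_left zero_le_one) _).trans
    (pow_le_pow_right₀ (le_add_of_nonneg_right (abs_nonneg t)) hl)

lemma abs_logPartialSum_le (L : ℝ) (b : ℕ → ℝ) (N : ℕ) {x : ℝ} (hx : 1 ≤ x) :
    |logPartialSum L b N x| ≤ (|L| + |b 0| + ∑ k ∈ range N, |b k|) * x := by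
  have hlog : |b 0 * log x| ≤ |b 0| * x := by
    rw [abs_mul, abs_of_nonneg (log_nonneg hx)]
    gcongr
    exact log_le_self (zero_le_one.trans hx)
  have hterm (k : ℕ) : |b k / (k * x ^ k)| ≤ |b k| * x := by
    rcases eq_or_ne k 0 with rfl | hk
    · simpa using mul_nonneg (abs_nonneg (b 0)) (zero_le_one.trans hx)
    have hden : 1 ≤ (k : ℝ) * x ^ k :=
      one_le_mul_of_one_le_of_one_le (Nat.one_le_cast.2 (Nat.pos_of_ne_zero hk)) (one_le_pow₀ hx)
    rw [abs_div, abs_of_pos (zero_lt_one.trans_le hden)]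
    exact (div_le_self (abs_nonneg _) hden).trans (le_mul_of_one_le_right (abs_nonneg _) hx)
  calc |logPartialSum L b N x|
      ≤ |L| + |b 0 * log x| + ∑ k ∈ range N, |b k / (k * x ^ k)| :=
        (abs_sub _ _).trans (add_le_add (abs_add_le _ _) (Finset.abs_sum_le_sum_abs _ _))
    _ ≤ |L| * x + |b 0| * x + ∑ k ∈ range N, |b k| * x := by
        gcongr with k
        · exact le_mul_of_one_le_right (abs_nonneg L) hx
        · exact hterm k
    _ = _ := by rw [← Finset.sum_mul, add_mul, add_mul]

lemma exists_abs_logPartialSum_binomialConv_pow_le (L : ℝ) (a : ℕ → ℝ) (N : ℕ) :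
    ∃ C, ∀ η t : ℝ, 1 ≤ η →
      |logPartialSum L (binomialConv a fun l => t ^ l) N η| ≤ C * (1 + |t|) ^ N * η := by
  set b := binomialConv (fun i => |a i|) fun _ => 1
  refine ⟨|L| + b 0 + ∑ k ∈ range N, b k, fun η t hη => ?_⟩
  have hQ : 1 ≤ (1 + |t|) ^ N := one_le_pow₀ (le_add_of_nonneg_right (abs_nonneg t))
  refine (abs_logPartialSum_le L _ N hη).trans (mul_le_mul_of_nonneg_right ?_ (by linarith))
  rw [add_mul, add_mul, Finset.sum_mul]
  gcongr with k hk
  · exact le_mul_of_one_le_right (abs_nonneg L) hQ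
  · exact abs_binomialConv_pow_le a N.zero_le t
  · exact abs_binomialConv_pow_le a (Finset.mem_range.1 hk).le t

section Convolution

variable {G w : ℝ → ℝ} {L B : ℝ} {a : ℕ → ℝ}

lemma exists_abs_sub_logPartialSum_binomialConv_pow_le_of_mul_le
    (hlin : ∀ x, |G x| ≤ B * (1 + |x|)) (L : ℝ) (a : ℕ → ℝ) (N : ℕ) {δ : ℝ} (hδ : 0 < δ) :
    ∃ C, 0 ≤ C ∧ ∀ η t : ℝ, 1 ≤ η → δ * η ≤ |t| →
      |G (η - t) - logPartialSum L (binomialConv a fun l => t ^ l) (N + 1) η| ≤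
        C * (1 + |t|) ^ (2 * N + 3) * (η ^ (N + 1))⁻¹ := by
  obtain ⟨C, hC⟩ := exists_abs_logPartialSum_binomialConv_pow_le L a (N + 1)
  have hB : 0 ≤ B := by simpa using (abs_nonneg _).trans (hlin 0)
  have hC0 : 0 ≤ C := by simpa using (abs_nonneg _).trans (hC 1 0 le_rfl)
  refine ⟨(2 * B + C) * δ⁻¹ ^ (N + 2), by positivity, fun η t hη hηt => ?_⟩
  have hη0 : 0 < η := zero_lt_one.trans_le hη
  have ht : 1 ≤ 1 + |t| := le_add_of_nonneg_right (abs_nonneg t)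
  have hG : |G (η - t)| ≤ B * (2 * ((1 + |t|) ^ (N + 1) * η)) := by
    refine (hlin _).trans (mul_le_mul_of_nonneg_left ?_ hB)
    have hsub : |η - t| ≤ η + |t| := by simpa [abs_of_pos hη0] using abs_sub η t
    have hpow : (1 + |t|) * η ≤ (1 + |t|) ^ (N + 1) * η := by
      gcongr
      exact le_self_pow₀ ht N.succ_ne_zero
    nlinarith [mul_nonneg (abs_nonneg t) (sub_nonneg.2 hη)]
  have hη_le : η ≤ δ⁻¹ * (1 + |t|) := by
    rw [inv_mul_eq_div, le_div_iff₀ hδ]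
    linarith
  calc |G (η - t) - logPartialSum L (binomialConv a fun l => t ^ l) (N + 1) η|
      ≤ B * (2 * ((1 + |t|) ^ (N + 1) * η)) + C * (1 + |t|) ^ (N + 1) * η :=
        (abs_sub _ _).trans (add_le_add hG (hC η t hη))
    _ = (2 * B + C) * (1 + |t|) ^ (N + 1) * η ^ (N + 2) * (η ^ (N + 1))⁻¹ := by
        field_simp
        ring
    _ ≤ (2 * B + C) * (1 + |t|) ^ (N + 1) * (δ⁻¹ * (1 + |t|)) ^ (N + 2) * (η ^ (N + 1))⁻¹ := by
        gcongr
    _ = _ := by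
        rw [mul_pow]
        ring

lemma HasLogExpansion.exists_abs_sub_logPartialSum_binomialConv_pow_le
    (hG : HasLogExpansion G L a) (hlin : ∀ x, |G x| ≤ B * (1 + |x|)) (N : ℕ) :
    ∃ C, ∀ᶠ η in atTop, ∀ t,
      |G (η - t) - logPartialSum L (binomialConv a fun l => t ^ l) (N + 1) η| ≤
        C * (1 + |t|) ^ (2 * N + 3) * (η ^ (N + 1))⁻¹ := by
  obtain ⟨C₁, hC₁, hnear⟩ := (hG.isBigO_shift N).exists_nonneg
  obtain ⟨p, hp, q, hq, hpq⟩ := Filter.eventually_prod_iff.1 hnear.bound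
  obtain ⟨δ, hδ, hqδ⟩ := Metric.eventually_nhds_iff.1 hq
  obtain ⟨C₂, hC₂, hfar⟩ :=
    exists_abs_sub_logPartialSum_binomialConv_pow_le_of_mul_le hlin L a N hδ
  refine ⟨C₁ + C₂, ?_⟩
  filter_upwards [hp, eventually_ge_atTop 1] with η hη hη1 t
  have hη0 : 0 < η := zero_lt_one.trans_le hη1
  rw [add_mul, add_mul]
  rcases lt_or_ge |t| (δ * η) with hlt | hge
  · have hv : q (t / η) := hqδ (by rwa [dist_zero_right, norm_div, norm_of_nonneg hη0.le,
      div_lt_iff₀ hη0])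
    have h := hpq hη hv
    rw [mul_one_sub, mul_div_cancel₀ _ hη0.ne', norm_eq_abs, norm_pow, abs_div, abs_of_pos hη0,
      norm_of_nonneg (by positivity), inv_eq_one_div, ← add_div, div_pow] at h
    refine h.trans (le_add_of_le_of_nonneg ?_ (by positivity))
    rw [div_eq_mul_inv, ← mul_assoc]
    gcongr 1
    gcongr C₁ * ?_
    exact pow_le_pow_right₀ (le_add_of_nonneg_right (abs_nonneg t)) (by omega)
  · exact le_add_of_nonneg_of_le (by positivity) (hfar η t hη1 hge)

lemma integrable_one_add_abs_pow_mul_abs (hw : ∀ n : ℕ, Integrable fun t => t ^ n * w t) (n : ℕ) :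
    Integrable fun t => (1 + |t|) ^ n * |w t| := by
  simp only [add_pow, one_pow, one_mul, Finset.sum_mul]
  refine integrable_finsetSum _ fun k _ => ((hw (n - k)).abs.const_mul (n.choose k)).congr ?_
  refine .of_forall fun t => ?_
  simp only [abs_mul, abs_pow]
  ring

lemma integrable_comp_sub_mul (hw : ∀ n : ℕ, Integrable fun t => t ^ n * w t)
    (hG : Measurable G) (hlin : ∀ x, |G x| ≤ B * (1 + |x|)) (η : ℝ) :
    Integrable fun t => G (η - t) * w t := by
  have hw0 : Integrable w := by simpa using hw 0
  refine ((integrable_one_add_abs_pow_mul_abs hw 1).const_mul (B * (1 + |η|))).mono'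
    ((hG.comp (measurable_const.sub measurable_id)).aestronglyMeasurable.mul
      hw0.aestronglyMeasurable) (.of_forall fun t => ?_)
  have hB : 0 ≤ B := by simpa using (abs_nonneg _).trans (hlin 0)
  rw [norm_mul, norm_eq_abs, norm_eq_abs, pow_one, ← mul_assoc, mul_assoc B]
  gcongr
  refine (hlin _).trans (mul_le_mul_of_nonneg_left ?_ hB)
  nlinarith [abs_sub η t, mul_nonneg (abs_nonneg η) (abs_nonneg t)]

lemma integrable_binomialConv_pow_mul (hw : ∀ n : ℕ, Integrable fun t => t ^ n * w t)
    (a : ℕ → ℝ) (k : ℕ) :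
    Integrable fun t => binomialConv a (fun l => t ^ l) k * w t := by
  simp only [binomialConv, Finset.sum_mul, mul_assoc]
  exact integrable_finsetSum _ fun p _ => ((hw p.2).const_mul _).const_mul _

lemma integral_binomialConv_pow_mul (hw : ∀ n : ℕ, Integrable fun t => t ^ n * w t)
    (a : ℕ → ℝ) (k : ℕ) :
    ∫ t, binomialConv a (fun l => t ^ l) k * w t =
      binomialConv a (fun l => ∫ t, t ^ l * w t) k := by
  simp only [binomialConv, Finset.sum_mul, mul_assoc]
  rw [integral_finsetSum _ fun p _ => ((hw p.2).const_mul _).const_mul _]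
  simp only [integral_const_mul]

lemma logPartialSum_binomialConv_pow_mul_eq (L : ℝ) (a : ℕ → ℝ) (N : ℕ) (w : ℝ → ℝ) (η t : ℝ) :
    logPartialSum L (binomialConv a fun l => t ^ l) N η * w t =
      L * w t + log η * (binomialConv a (fun l => t ^ l) 0 * w t) -
        ∑ k ∈ range N, (k * η ^ k : ℝ)⁻¹ * (binomialConv a (fun l => t ^ l) k * w t) := by
  rw [logPartialSum, sub_mul, add_mul, Finset.sum_mul]
  congr 1
  · ring
  · exact Finset.sum_congr rfl fun k _ => by ring

lemma integrable_logPartialSum_binomialConv_pow_mul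
    (hw : ∀ n : ℕ, Integrable fun t => t ^ n * w t) (L : ℝ) (a : ℕ → ℝ) (N : ℕ) (η : ℝ) :
    Integrable fun t => logPartialSum L (binomialConv a fun l => t ^ l) N η * w t := by
  have hw0 : Integrable w := by simpa using hw 0
  have hconv := integrable_binomialConv_pow_mul hw a
  simp only [logPartialSum_binomialConv_pow_mul_eq]
  exact ((hw0.const_mul L).add ((hconv 0).const_mul _)).sub
    (integrable_finsetSum _ fun k _ => (hconv k).const_mul _)

lemma integral_logPartialSum_binomialConv_pow_mul
    (hw : ∀ n : ℕ, Integrable fun t => t ^ n * w t) (L : ℝ) (a : ℕ → ℝ) (N : ℕ) (η : ℝ) :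
    ∫ t, logPartialSum L (binomialConv a fun l => t ^ l) N η * w t =
      logPartialSum (L * ∫ t, w t) (binomialConv a fun l => ∫ t, t ^ l * w t) N η := by
  have hw0 : Integrable w := by simpa using hw 0
  have hconv := integrable_binomialConv_pow_mul hw a
  have hlog : Integrable fun t =>
      L * w t + log η * (binomialConv a (fun l => t ^ l) 0 * w t) :=
    (hw0.const_mul L).add ((hconv 0).const_mul _)
  simp only [logPartialSum_binomialConv_pow_mul_eq]
  rw [integral_sub hlog (integrable_finsetSum _ fun k _ => (hconv k).const_mul _),
    integral_add (hw0.const_mul L) ((hconv 0).const_mul _),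
    integral_finsetSum _ fun k _ => (hconv k).const_mul _]
  simp only [integral_const_mul, integral_binomialConv_pow_mul hw, logPartialSum]
  simp only [div_eq_inv_mul, mul_comm (log η)]

theorem HasLogExpansion.integral_comp_sub_mul (hG : HasLogExpansion G L a) (hmeas : Measurable G)
    (hlin : ∀ x, |G x| ≤ B * (1 + |x|)) (hw : ∀ n : ℕ, Integrable fun t => t ^ n * w t) :
    HasLogExpansion (fun η => ∫ t, G (η - t) * w t) (L * ∫ t, w t)
      (binomialConv a fun l => ∫ t, t ^ l * w t) := by
  refine .of_succ fun N => ?_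
  obtain ⟨C, hC⟩ := hG.exists_abs_sub_logPartialSum_binomialConv_pow_le hlin N
  refine .of_bound (C * ∫ t, (1 + |t|) ^ (2 * N + 3) * |w t|) ?_
  filter_upwards [hC, eventually_ge_atTop 0] with η hη hη0
  rw [← integral_logPartialSum_binomialConv_pow_mul hw, ← integral_sub
    (integrable_comp_sub_mul hw hmeas hlin η)
    (integrable_logPartialSum_binomialConv_pow_mul hw L a _ η)]
  simp only [← sub_mul]
  rw [norm_of_nonneg (by positivity : 0 ≤ (η ^ (N + 1))⁻¹), mul_right_comm, ← integral_const_mul]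
  refine norm_integral_le_of_norm_le
    ((integrable_one_add_abs_pow_mul_abs hw _).const_mul _) (.of_forall fun t => ?_)
  rw [norm_mul, norm_eq_abs, norm_eq_abs]
  calc _ ≤ C * (1 + |t|) ^ (2 * N + 3) * (η ^ (N + 1))⁻¹ * |w t| := by gcongr; exact hη t
    _ = _ := by ring

end Convolution

lemma isBigO_inv_pow_of_hasDerivAt {f f' : ℝ → ℝ} {n : ℕ}
    (hderiv : ∀ᶠ x in atTop, HasDerivAt f (f' x) x)
    (hbound : f' =O[atTop] fun x => (x ^ (n + 2))⁻¹) (hlim : Tendsto f atTop (nhds 0)) :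
    f =O[atTop] fun x => (x ^ (n + 1))⁻¹ := by
  obtain ⟨C, hC⟩ := hbound.bound
  obtain ⟨X, hX⟩ := eventually_atTop.1 (hderiv.and (hC.and (eventually_gt_atTop 0)))
  refine .of_bound (C / (n + 1)) ?_
  filter_upwards [eventually_ge_atTop X] with x hx
  have hx0 : 0 < x := (hX x hx).2.2
  have hprim (y : ℝ) (hy : 0 < y) :
      HasDerivAt (fun y => C / (n + 1) * ((x ^ (n + 1))⁻¹ - (y ^ (n + 1))⁻¹))
        (C * (y ^ (n + 2))⁻¹) y := by
    refine ((((hasDerivAt_pow (n + 1) y).inv (by positivity)).const_sub _).const_mul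
      _).congr_deriv ?_
    push_cast
    field_simp
    ring
  have hincr (y : ℝ) (hy : x ≤ y) :
      ‖f y - f x‖ ≤ C / (n + 1) * ((x ^ (n + 1))⁻¹ - (y ^ (n + 1))⁻¹) := by
    have hXz (z : ℝ) (hz : x ≤ z) := hX z (hx.trans hz)
    refine image_norm_le_of_norm_deriv_right_le_deriv_boundary' (f := fun y => f y - f x)
      (fun z hz => ((hXz z hz.1).1.sub_const _).continuousAt.continuousWithinAt)
      (fun z hz => ((hXz z hz.1).1.sub_const _).hasDerivWithinAt) (by simp)
      (fun z hz => (hprim z (hXz z hz.1).2.2).continuousAt.continuousWithinAt)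
      (fun z hz => (hprim z (hXz z hz.1).2.2).hasDerivWithinAt)
      (fun z hz => (hXz z hz.1).2.1.trans_eq ?_) ⟨hy, le_rfl⟩
    rw [norm_inv, norm_pow, norm_of_nonneg (hXz z hz.1).2.2.le]
  have hpow : Tendsto (fun y : ℝ => (y ^ (n + 1))⁻¹) atTop (nhds 0) :=
    (tendsto_pow_atTop n.succ_ne_zero).inv_tendsto_atTop
  rw [norm_of_nonneg (by positivity : 0 ≤ (x ^ (n + 1))⁻¹)]
  have h := le_of_tendsto_of_tendsto (hlim.sub_const (f x)).norm
    ((hpow.const_sub _).const_mul _) ((eventually_ge_atTop x).mono hincr)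
  simpa using h

lemma HasLogExpansion.of_hasDerivAt {G g : ℝ → ℝ} {L : ℝ} {a : ℕ → ℝ}
    (hderiv : ∀ᶠ x in atTop, HasDerivAt G (g x) x)
    (hg : ∀ N : ℕ, (fun x => g x - ∑ i ∈ range N, a i * (x ^ (i + 1))⁻¹)
      =O[atTop] fun x => (x ^ (N + 1))⁻¹)
    (hlim : Tendsto (fun x => G x - a 0 * log x) atTop (nhds L)) : HasLogExpansion G L a := by
  refine .of_succ fun N => isBigO_inv_pow_of_hasDerivAt ?_ (hg (N + 1)) ?_
  · filter_upwards [hderiv, eventually_gt_atTop 0] with x hG hx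
    have hterm (i : ℕ) : HasDerivAt (fun x => a (i + 1) / ((i + 1 : ℕ) * x ^ (i + 1)))
        (-(a (i + 1) * (x ^ (i + 1 + 1))⁻¹)) x := by
      simp only [div_eq_mul_inv, mul_inv, ← mul_assoc]
      refine (((hasDerivAt_pow (i + 1) x).inv (by positivity)).const_mul _).congr_deriv ?_
      push_cast
      field_simp
      ring
    have hlog : HasDerivAt (fun x => L + a 0 * log x) (a 0 * x⁻¹) x :=
      ((hasDerivAt_log hx.ne').const_mul _).const_add L
    have hsum := HasDerivAt.fun_sum fun i (_ : i ∈ range N) => hterm i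
    have h := hG.sub (hlog.sub hsum)
    simp only [logPartialSum, Finset.sum_range_succ' _ N, Nat.cast_zero, zero_mul, div_zero,
      add_zero]
    refine h.congr_deriv ?_
    simp only [Finset.sum_neg_distrib, zero_add, pow_one]
    ring
  · have hterm (i : ℕ) : Tendsto (fun x : ℝ => a (i + 1) / ((i + 1 : ℕ) * x ^ (i + 1))) atTop
        (nhds 0) :=
      ((tendsto_pow_atTop i.succ_ne_zero).const_mul_atTop
        (Nat.cast_pos.2 i.succ_pos)).const_div_atTop _
    have h := (hlim.sub_const L).add (tendsto_finsetSum (range N) fun i _ => hterm i)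
    simp only [sub_self, Finset.sum_const_zero, add_zero] at h
    refine h.congr fun x => ?_
    simp only [logPartialSum, Finset.sum_range_succ' _ N, Nat.cast_zero, zero_mul, div_zero]
    ring

lemma HasLogExpansion.congr {G H : ℝ → ℝ} {L : ℝ} {a : ℕ → ℝ} (hG : HasLogExpansion G L a)
    (h : G =ᶠ[atTop] H) : HasLogExpansion H L a :=
  fun N => (hG N).congr' (h.sub .rfl) .rfl

lemma HasLogExpansion.const_mul {G : ℝ → ℝ} {L : ℝ} {a : ℕ → ℝ} (k : ℝ)
    (hG : HasLogExpansion G L a) :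
    HasLogExpansion (fun x => k * G x) (k * L) fun i => k * a i := by
  refine fun N => ((hG N).const_mul_left k).congr_left fun x => ?_
  simp only [logPartialSum, mul_sub, mul_add, Finset.mul_sum, mul_div_assoc, mul_assoc]

lemma HasLogExpansion.comp_div_const {G : ℝ → ℝ} {L : ℝ} {a : ℕ → ℝ} (hG : HasLogExpansion G L a)
    {c : ℝ} (hc : 0 < c) :
    HasLogExpansion (fun x => G (x / c)) (L - a 0 * log c) fun i => a i * c ^ i := by
  intro N
  refine (((hG N).comp_tendsto (tendsto_id.atTop_div_const hc)).trans (.of_bound (c ^ N) ?_)).congr'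
    ?_ .rfl
  · refine .of_forall fun x => ?_
    simp only [Function.comp_apply, id]
    rw [div_pow, inv_div, div_eq_mul_inv, norm_mul, norm_of_nonneg (by positivity : 0 ≤ c ^ N)]
  · filter_upwards [eventually_gt_atTop 0] with x hx
    simp only [Function.comp_apply, id, logPartialSum, pow_zero, mul_one]
    rw [log_div hx.ne' hc.ne']
    have hterm (i : ℕ) : a i / (i * (x / c) ^ i) = a i * c ^ i / (i * x ^ i) := by
      rw [div_pow]
      field_simp
    simp only [hterm]
    ring

lemma HasLogExpansion.isBigO_id {G : ℝ → ℝ} {L : ℝ} {a : ℕ → ℝ} (hG : HasLogExpansion G L a) :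
    G =O[atTop] fun x => x := by
  have hone : (fun _ : ℝ => (1 : ℝ)) =O[atTop] fun x => x :=
    (isLittleO_const_id_atTop (1 : ℝ)).isBigO
  have hrem : (fun x => G x - (L + a 0 * log x)) =O[atTop] fun x => x := by
    simpa [logPartialSum] using (hG 0).trans (by simpa using hone)
  refine (hrem.add ((hone.const_mul_left L).add
    (isLittleO_log_id_atTop.isBigO.const_mul_left (a 0)))).congr_left fun x => ?_
  simp

lemma exists_abs_le_mul_one_add_abs {H : ℝ → ℝ} (hH : Continuous H) (hzero : ∀ x ≤ 0, H x = 0)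
    (hlin : H =O[atTop] fun x => x) : ∃ B, ∀ x, |H x| ≤ B * (1 + |x|) := by
  obtain ⟨C, hC0, hC⟩ := hlin.exists_nonneg
  obtain ⟨X, hX⟩ := eventually_atTop.1 hC.bound
  obtain ⟨D, hD⟩ := isCompact_Icc.exists_bound_of_continuousOn (s := Set.Icc 0 X) hH.continuousOn
  refine ⟨C + |D|, fun x => ?_⟩
  rcases le_or_gt x 0 with hx | hx
  · rw [hzero x hx, abs_zero]
    positivity
  rcases le_total X x with hXx | hXx
  · have h := hX x hXx
    rw [norm_eq_abs, norm_eq_abs] at h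
    nlinarith [mul_nonneg (abs_nonneg D) (abs_nonneg x), abs_nonneg D]
  · have h := (hD x ⟨hx.le, hXx⟩).trans (le_abs_self D)
    rw [norm_eq_abs] at h
    nlinarith [mul_nonneg (abs_nonneg D) (abs_nonneg x), mul_nonneg hC0 (abs_nonneg x)]

lemma tendsto_mul_sigmoid_sub_atTop {G : ℝ → ℝ} (hlin : G =O[atTop] fun x => x) (η : ℝ) :
    Tendsto (fun x => G x * sigmoid (η - x)) atTop (nhds 0) := by
  have hσ : (fun x => sigmoid (η - x)) =O[atTop] fun x => exp (-x) := by
    refine .of_bound (exp η) (.of_forall fun x => ?_)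
    rw [norm_of_nonneg (sigmoid_nonneg _), norm_of_nonneg (exp_pos _).le, ← exp_add,
      ← neg_sub x η, ← sub_eq_add_neg, ← neg_sub x η]
    exact sigmoid_neg_le_exp_neg _
  refine (hlin.mul hσ).trans_tendsto ?_
  simpa using tendsto_pow_mul_exp_neg_atTop_nhds_zero 1

lemma integral_Ioi_mul_sigmoid_sub_eq {G g : ℝ → ℝ} (hcont : ContinuousOn G (Set.Ici 0))
    (hzero : G 0 = 0) (hderiv : ∀ x, 0 < x → HasDerivAt G (g x) x)
    (hlin : G =O[atTop] fun x => x) {η : ℝ}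
    (hint : IntegrableOn (fun x => g x * sigmoid (η - x)) (Set.Ioi 0))
    (hconv : Integrable fun t => G (max (η - t) 0) * fermiKernel t) :
    ∫ x in Set.Ioi 0, g x * sigmoid (η - x) = ∫ t, G (max (η - t) 0) * fermiKernel t := by
  have hind : (fun x => G (max x 0) * fermiKernel (η - x)) =
      (Set.Ioi 0).indicator fun x => G x * fermiKernel (η - x) := by
    funext x
    rcases le_or_gt x 0 with hx | hx
    · rw [Set.indicator_of_notMem (by simpa using hx), max_eq_right hx, hzero, zero_mul]
    · rw [Set.indicator_of_mem (by simpa using hx), max_eq_left hx.le]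
  have hconv' : IntegrableOn (fun x => G x * fermiKernel (η - x)) (Set.Ioi 0) := by
    rw [← integrable_indicator_iff measurableSet_Ioi, ← hind]
    simpa using hconv.comp_sub_left η
  have hflip : ∫ t, G (max (η - t) 0) * fermiKernel t =
      ∫ x in Set.Ioi 0, G x * fermiKernel (η - x) := by
    rw [← integral_indicator measurableSet_Ioi, ← hind, ← integral_sub_left_eq_self _ volume η]
    simp only [sub_sub_cancel]
  have hboundary :
      Tendsto (fun x => G x * sigmoid (η - x)) (nhdsWithin 0 (Set.Ioi 0)) (nhds 0) := by
    have hσ : Continuous fun x => sigmoid (η - x) := by fun_prop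
    have h : Tendsto (fun x => G x * sigmoid (η - x)) (nhdsWithin 0 (Set.Ioi 0))
        (nhds (G 0 * sigmoid (η - 0))) :=
      ((hcont 0 self_mem_Ici).mono Set.Ioi_subset_Ici_self).mul hσ.continuousWithinAt
    rwa [hzero, zero_mul] at h
  have hparts := integral_Ioi_mul_deriv_eq_deriv_mul hderiv
    (v := fun x => sigmoid (η - x)) (v' := fun x => -fermiKernel (η - x)) (a' := 0) (b' := 0)
    (fun x _ => by
      simpa using (hasDerivAt_sigmoid_fermiKernel (η - x)).comp_const_sub η x)
    (hconv'.neg.congr_fun (fun x _ => (mul_neg _ _).symm) measurableSet_Ioi) hint hboundary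
    (tendsto_mul_sigmoid_sub_atTop hlin η)
  simp only [mul_neg, integral_neg] at hparts
  linarith

theorem HasLogExpansion.integral_Ioi_mul_sigmoid_sub {G g : ℝ → ℝ} {L : ℝ} {a : ℕ → ℝ}
    (hG : HasLogExpansion G L a) (hcont : ContinuousOn G (Set.Ici 0)) (hzero : G 0 = 0)
    (hderiv : ∀ x, 0 < x → HasDerivAt G (g x) x)
    (hint : ∀ η, IntegrableOn (fun x => g x * sigmoid (η - x)) (Set.Ioi 0)) :
    HasLogExpansion (fun η => ∫ x in Set.Ioi 0, g x * sigmoid (η - x)) L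
      (binomialConv a fermiMoment) := by
  have hH : HasLogExpansion (fun x => G (max x 0)) L a :=
    hG.congr ((eventually_ge_atTop 0).mono fun x hx => by simp only [max_eq_left hx])
  have hHcont : Continuous fun x => G (max x 0) :=
    hcont.comp_continuous (continuous_id.max continuous_const) fun x => le_max_right x 0
  obtain ⟨B, hB⟩ := exists_abs_le_mul_one_add_abs hHcont
    (fun x hx => by rw [max_eq_right hx, hzero]) hH.isBigO_id
  have h := hH.integral_comp_sub_mul hHcont.measurable hB integrable_pow_mul_fermiKernel
  have hmass : ∫ t, fermiKernel t = 1 := by simpa [fermiMoment] using fermiMoment_zero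
  rw [hmass, mul_one] at h
  refine h.congr (.of_forall fun η => ?_)
  exact (integral_Ioi_mul_sigmoid_sub_eq hcont hzero hderiv hG.isBigO_id (hint η)
    (integrable_comp_sub_mul integrable_pow_mul_fermiKernel hHcont.measurable hB η)).symm

/-! ### The remainder of the square root and its primitive -/

lemma add_one_mul_ringChoose_succ {K : Type*} [Field K] [CharZero K] (r : K) (n : ℕ) :
    (n + 1) * Ring.choose r (n + 1) = (r - n) * Ring.choose r n := by
  have h : ((n + 1 : ℕ) : K) ≠ 0 := Nat.cast_ne_zero.2 n.succ_ne_zero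
  rw [Ring.choose_eq_smul, Ring.choose_eq_smul, descPochhammer_succ_right,
    Polynomial.smeval_mul, Nat.factorial_succ]
  simp only [Polynomial.smeval_sub, Polynomial.smeval_X, Polynomial.smeval_natCast, pow_one,
    pow_zero, smul_eq_mul, Nat.cast_mul, nsmul_eq_mul, mul_one]
  push_cast at h ⊢
  field_simp

/-- The remainder `x^{m-3/2} √(1 + x) - ∑_{j<m} (1/2 choose j) x^{m-1-j}`, obtained by subtracting
from `x^{m-3/2} √(1 + x)` the polynomial part of its expansion in descending powers of `x`. -/
noncomputable def sqrtRemainder (m : ℕ) (x : ℝ) : ℝ :=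
  x ^ ((m : ℝ) - 3 / 2) * √(1 + x) - ∑ j ∈ range m, Ring.choose (1 / 2 : ℝ) j * x ^ (m - 1 - j)

lemma mul_sqrtRemainder (m : ℕ) {x : ℝ} (hx : 0 ≤ x) :
    x * sqrtRemainder m x = sqrtRemainder (m + 1) x + Ring.choose (1 / 2 : ℝ) m := by
  have hne : (m : ℝ) - 3 / 2 + 1 ≠ 0 := fun h => by
    have h' : ((2 * m : ℕ) : ℝ) = (1 : ℕ) := by push_cast; linarith
    have := Nat.cast_injective h'
    omega
  have hpow : x ^ (((m + 1 : ℕ) : ℝ) - 3 / 2) = x * x ^ ((m : ℝ) - 3 / 2) := by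
    rw [mul_comm x, ← rpow_add_one' hx hne]
    push_cast
    ring_nf
  have hsum : ∑ j ∈ range m, Ring.choose (1 / 2 : ℝ) j * x ^ (m + 1 - 1 - j) =
      x * ∑ j ∈ range m, Ring.choose (1 / 2 : ℝ) j * x ^ (m - 1 - j) := by
    rw [Finset.mul_sum]
    refine Finset.sum_congr rfl fun j hj => ?_
    have hj' := Finset.mem_range.1 hj
    rw [show m + 1 - 1 - j = m - 1 - j + 1 by omega]
    ring
  rw [sqrtRemainder, sqrtRemainder, Finset.sum_range_succ, hpow, hsum, Nat.add_sub_cancel,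
    Nat.sub_self]
  ring

lemma continuous_sqrtRemainder_add_two (m : ℕ) : Continuous (sqrtRemainder (m + 2)) := by
  have hm : 0 ≤ ((m + 2 : ℕ) : ℝ) - 3 / 2 := by
    push_cast
    linarith [m.cast_nonneg (α := ℝ)]
  exact ((continuous_rpow_const hm).mul (by fun_prop)).sub (by fun_prop)

lemma hasDerivAt_sqrtRemainder (m : ℕ) {x : ℝ} (hx : 0 < x) :
    HasDerivAt (sqrtRemainder m)
      ((((m - 1) * x + (m - 3 / 2)) * sqrtRemainder m x - m * Ring.choose (1 / 2 : ℝ) m) /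
        (x * (x + 1))) x := by
  induction m with
  | zero =>
    have h := (hasDerivAt_rpow_const (p := -(3 / 2)) (.inl hx.ne')).fun_mul
      (((hasDerivAt_id' x).const_add 1).sqrt (by positivity))
    have hfun : sqrtRemainder 0 = fun y => y ^ (-(3 / 2) : ℝ) * √(1 + y) := by
      funext y
      simp [sqrtRemainder]
    simp only [hfun, Nat.cast_zero, zero_sub, zero_mul, sub_zero]
    refine h.congr_deriv ?_
    have hsq : √(1 + x) ^ 2 = 1 + x := sq_sqrt (by positivity)
    have hs : √(1 + x) ≠ 0 := by positivity
    rw [rpow_sub_one hx.ne']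
    field_simp
    rw [hsq]
    ring
  | succ m ih =>
    have hcongr : sqrtRemainder (m + 1) =ᶠ[nhds x]
        fun y => y * sqrtRemainder m y - Ring.choose (1 / 2 : ℝ) m :=
      (lt_mem_nhds hx).mono fun y hy => (sub_eq_of_eq_add (mul_sqrtRemainder m hy.le)).symm
    refine ((((hasDerivAt_id' x).fun_mul ih).sub_const _).congr_of_eventuallyEq
      hcongr).congr_deriv ?_
    rw [hcongr.eq_of_nhds]
    push_cast
    field_simp
    linear_combination 2 * add_one_mul_ringChoose_succ (1 / 2 : ℝ) m

lemma sqrtRemainder_sub_sum (m N : ℕ) {x : ℝ} (hx : 0 < x) :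
    sqrtRemainder m x - ∑ i ∈ range N, Ring.choose (1 / 2 : ℝ) (m + i) * (x ^ (i + 1))⁻¹ =
      (x ^ N)⁻¹ * sqrtRemainder (m + N) x := by
  induction N with
  | zero => simp
  | succ N ih =>
    rw [Finset.sum_range_succ, ← sub_sub, ih, ← add_assoc,
      ← sub_eq_of_eq_add (mul_sqrtRemainder (m + N) hx.le)]
    field_simp
    ring

lemma isBigO_sqrtRemainder (m : ℕ) : sqrtRemainder m =O[atTop] fun x => x⁻¹ := by
  have hbinom := (isBigO_sub_sum_of_hasFPowerSeriesAt
    (one_add_rpow_hasFPowerSeriesAt_zero (a := 1 / 2)) m).comp_tendsto tendsto_inv_atTop_zero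
  refine ((isBigO_refl (fun x : ℝ => x ^ ((m : ℝ) - 1)) atTop).mul hbinom).congr' ?_ ?_
  · filter_upwards [eventually_gt_atTop 0] with x hx
    have hsqrt : √(1 + x) = x ^ (1 / 2 : ℝ) * (1 + x⁻¹) ^ (1 / 2 : ℝ) := by
      rw [sqrt_eq_rpow, ← mul_rpow hx.le (by positivity), mul_add, mul_inv_cancel₀ hx.ne', mul_one,
        add_comm]
    have hterm (j : ℕ) (hj : j ∈ range m) : x ^ (m - 1 - j) = x ^ ((m : ℝ) - 1) * x⁻¹ ^ j := by
      have hj' := Finset.mem_range.1 hj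
      rw [← rpow_natCast, ← rpow_natCast, inv_rpow hx.le, ← rpow_neg hx.le, ← rpow_add hx,
        Nat.sub_sub, Nat.cast_sub (by omega)]
      push_cast
      ring_nf
    rw [sqrtRemainder, Finset.sum_congr rfl fun j hj => by rw [hterm j hj], hsqrt, ← mul_assoc,
      ← rpow_add hx, Function.comp_apply, mul_sub, Finset.mul_sum]
    congr 1
    · ring_nf
    · exact Finset.sum_congr rfl fun j _ => mul_left_comm _ _ _
  · filter_upwards [eventually_gt_atTop 0] with x hx
    rw [Function.comp_apply, inv_pow, ← rpow_natCast, ← rpow_neg hx.le, ← rpow_add hx,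
      ← rpow_neg_one]
    ring_nf

lemma isBigO_sqrtRemainder_sub_sum (m N : ℕ) :
    (fun x => sqrtRemainder m x - ∑ i ∈ range N, Ring.choose (1 / 2 : ℝ) (m + i) * (x ^ (i + 1))⁻¹)
      =O[atTop] fun x => (x ^ (N + 1))⁻¹ := by
  refine ((isBigO_refl (fun x : ℝ => (x ^ N)⁻¹) atTop).mul
    (isBigO_sqrtRemainder (m + N))).congr' ?_ ?_
  · filter_upwards [eventually_gt_atTop 0] with x hx
    exact (sqrtRemainder_sub_sum m N hx).symm
  · exact .of_forall fun x => by simp only [pow_succ, mul_inv]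

lemma tendsto_mul_sqrtRemainder (m : ℕ) :
    Tendsto (fun x => x * sqrtRemainder m x) atTop (nhds (Ring.choose (1 / 2 : ℝ) m)) := by
  have h := ((isBigO_sqrtRemainder (m + 1)).trans_tendsto tendsto_inv_atTop_zero).add_const
    (Ring.choose (1 / 2 : ℝ) m)
  rw [zero_add] at h
  exact h.congr' ((eventually_ge_atTop 0).mono fun x hx => (mul_sqrtRemainder m hx).symm)

lemma hasDerivAt_mul_sqrtRemainder_add (m : ℕ) {x : ℝ} (hx : 0 < x) :
    HasDerivAt (fun x => x * (sqrtRemainder m x + sqrtRemainder (m + 1) x))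
      ((m + 1) * sqrtRemainder (m + 1) x + (m - 1 / 2) * sqrtRemainder m x) x := by
  refine ((hasDerivAt_id' x).fun_mul
    ((hasDerivAt_sqrtRemainder m hx).fun_add (hasDerivAt_sqrtRemainder (m + 1) hx))).congr_deriv ?_
  rw [← sub_eq_of_eq_add (mul_sqrtRemainder m hx.le)]
  have h := add_one_mul_ringChoose_succ (1 / 2 : ℝ) m
  push_cast
  rw [h]
  field_simp
  ring

/-- The primitive on `(0, ∞)` of `sqrtRemainder (n + 1)` that vanishes at `0`. The recursion comes
from the derivative of `x (r_{n+1} + r_{n+2})`, a combination of the remainders `r_{n+1}` and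
`r_{n+2}`. -/
noncomputable def sqrtRemainderPrimitive : ℕ → ℝ → ℝ
  | 0, x => x * sqrtRemainder 1 x + arsinh √x
  | n + 1, x => (x * (sqrtRemainder (n + 1) x + sqrtRemainder (n + 2) x) -
      (n + 1 / 2) * sqrtRemainderPrimitive n x) / (n + 2)

lemma sqrtRemainderPrimitive_apply_zero (n : ℕ) : sqrtRemainderPrimitive n 0 = 0 := by
  induction n with
  | zero => simp [sqrtRemainderPrimitive]
  | succ n ih => simp [sqrtRemainderPrimitive, ih]

lemma continuousOn_sqrtRemainderPrimitive (n : ℕ) :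
    ContinuousOn (sqrtRemainderPrimitive n) (Set.Ici 0) := by
  have hmul (m : ℕ) : ContinuousOn (fun x => x * sqrtRemainder (m + 1) x) (Set.Ici 0) :=
    ((continuous_sqrtRemainder_add_two m).add continuous_const).continuousOn.congr
      fun x hx => mul_sqrtRemainder (m + 1) hx
  induction n with
  | zero => exact (hmul 0).add continuous_sqrt.arsinh.continuousOn
  | succ n ih =>
    simp only [sqrtRemainderPrimitive, mul_add]
    exact (((hmul n).add (hmul (n + 1))).sub (ih.const_mul _)).div_const _

lemma hasDerivAt_sqrtRemainderPrimitive (n : ℕ) {x : ℝ} (hx : 0 < x) :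
    HasDerivAt (sqrtRemainderPrimitive n) (sqrtRemainder (n + 1) x) x := by
  induction n with
  | zero =>
    refine (((hasDerivAt_id' x).fun_mul (hasDerivAt_sqrtRemainder 1 hx)).add
      (hasDerivAt_sqrt hx.ne').arsinh).congr_deriv ?_
    have hchoose : Ring.choose (1 / 2 : ℝ) 1 = 1 / 2 := Ring.choose_one_right _
    have hr : sqrtRemainder 1 x = √(1 + x) / √x - 1 := by
      rw [sqrtRemainder, Nat.cast_one, show (1 : ℝ) - 3 / 2 = -(1 / 2) by norm_num,
        rpow_neg hx.le, ← sqrt_eq_rpow]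
      simp only [Finset.sum_range_one, Ring.choose_zero_right]
      ring
    have hs : √(1 + x) ^ 2 = 1 + x := sq_sqrt (by positivity)
    have hs' : √(1 + x) ≠ 0 := by positivity
    have hx' : √x ≠ 0 := by positivity
    rw [hchoose, hr, sq_sqrt hx.le, smul_eq_mul]
    push_cast
    have hx2 : √x ^ 2 = x := sq_sqrt hx.le
    generalize √x = u at *
    generalize √(1 + x) = v at *
    subst hx2
    field_simp
    linear_combination -hs
  | succ n ih =>
    refine (((hasDerivAt_mul_sqrtRemainder_add (n + 1) hx).sub
      (ih.const_mul ((n : ℝ) + 1 / 2))).div_const ((n : ℝ) + 2)).congr_deriv ?_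
    push_cast
    field_simp
    ring

lemma digamma_add_one {x : ℝ} (hx : 0 < x) : digamma (x + 1) = digamma x + x⁻¹ := by
  have hΓ : DifferentiableAt ℝ Real.Gamma x :=
    differentiableAt_Gamma fun m => ((neg_nonpos.2 m.cast_nonneg).trans_lt hx).ne'
  have hcongr : (fun y => Real.Gamma (y + 1)) =ᶠ[nhds x] fun y => y * Real.Gamma y :=
    (lt_mem_nhds hx).mono fun y hy => Real.Gamma_add_one hy.ne'
  have hderiv : deriv Real.Gamma (x + 1) = Real.Gamma x + x * deriv Real.Gamma x := by
    rw [← deriv_comp_add_const, hcongr.deriv_eq,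
      ((hasDerivAt_id' x).fun_mul hΓ.hasDerivAt).deriv, one_mul]
  rw [digamma, digamma, hderiv, Real.Gamma_add_one hx.ne', add_div,
    div_mul_cancel_right₀ (Real.Gamma_pos_of_pos hx).ne', mul_div_mul_left _ _ hx.ne', add_comm]

lemma digamma_one : digamma 1 = -eulerMascheroniConstant := by
  rw [digamma, hasDerivAt_Gamma_one.deriv, Real.Gamma_one, div_one]

lemma digamma_one_half : digamma (1 / 2) = -(eulerMascheroniConstant + 2 * log 2) := by
  rw [digamma, hasDerivAt_Gamma_one_half.deriv, Gamma_one_half_eq]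
  field_simp

lemma tendsto_arsinh_sqrt_sub_log :
    Tendsto (fun x => arsinh √x - 1 / 2 * log x) atTop (nhds (log 2)) := by
  have h : Tendsto (fun x : ℝ => log (1 + √(1 + x⁻¹))) atTop (nhds (log (1 + √(1 + 0)))) :=
    ((((tendsto_inv_atTop_zero.const_add 1).sqrt).const_add 1).log (by positivity))
  rw [add_zero, sqrt_one, one_add_one_eq_two] at h
  refine h.congr' ((eventually_gt_atTop 0).mono fun x hx => ?_)
  have hsqrt : √(1 + x) = √x * √(1 + x⁻¹) := by
    rw [← sqrt_mul hx.le, mul_add, mul_inv_cancel₀ hx.ne', mul_one, add_comm]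
  have harsinh : arsinh √x = log (√x * (1 + √(1 + x⁻¹))) := by
    rw [arsinh, sq_sqrt hx.le, hsqrt, mul_add, mul_one]
  beta_reduce
  rw [harsinh, log_mul (by positivity) (by positivity), log_sqrt hx.le]
  ring

lemma tendsto_sqrtRemainderPrimitive_sub_log (n : ℕ) :
    Tendsto (fun x => sqrtRemainderPrimitive n x - Ring.choose (1 / 2 : ℝ) (n + 1) * log x) atTop
      (nhds (Ring.choose (1 / 2 : ℝ) (n + 1) * (digamma (n + 2) - digamma (n + 1 / 2)))) := by
  induction n with
  | zero =>
    have h := (tendsto_mul_sqrtRemainder 1).add tendsto_arsinh_sqrt_sub_log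
    have hψ : digamma 2 = 1 - eulerMascheroniConstant := by
      rw [← one_add_one_eq_two, digamma_add_one one_pos, digamma_one]
      ring
    simp only [Nat.cast_zero, zero_add, Ring.choose_one_right, hψ, digamma_one_half] at h ⊢
    convert h using 2
    · simp only [sqrtRemainderPrimitive]
      ring
    · ring
  | succ n ih =>
    have h := (((tendsto_mul_sqrtRemainder (n + 1)).add (tendsto_mul_sqrtRemainder (n + 2))).sub
      (ih.const_mul ((n : ℝ) + 1 / 2))).div_const ((n : ℝ) + 2)
    have hrec := add_one_mul_ringChoose_succ (1 / 2 : ℝ) (n + 1)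
    have hψ₁ := digamma_add_one (by positivity : (0 : ℝ) < n + 2)
    have hψ₂ := digamma_add_one (by positivity : (0 : ℝ) < n + 1 / 2)
    push_cast at hrec ⊢
    have hchoose : Ring.choose (1 / 2 : ℝ) (n + 1 + 1) =
        -((n + 1 / 2) * Ring.choose (1 / 2 : ℝ) (n + 1)) / (n + 2) := by
      field_simp
      linear_combination 2 * hrec
    convert h using 2
    · simp only [sqrtRemainderPrimitive, hchoose]
      field_simp
      ring
    · rw [add_right_comm (n : ℝ) 1 2, add_right_comm (n : ℝ) 1 (1 / 2), hψ₁, hψ₂, hchoose]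
      field_simp
      ring

lemma hasLogExpansion_sqrtRemainderPrimitive (n : ℕ) :
    HasLogExpansion (sqrtRemainderPrimitive n)
      (Ring.choose (1 / 2 : ℝ) (n + 1) * (digamma (n + 2) - digamma (n + 1 / 2)))
      fun i => Ring.choose (1 / 2 : ℝ) (n + 1 + i) :=
  .of_hasDerivAt
    ((eventually_gt_atTop 0).mono fun _ hx => hasDerivAt_sqrtRemainderPrimitive n hx)
    (isBigO_sqrtRemainder_sub_sum (n + 1)) (tendsto_sqrtRemainderPrimitive_sub_log n)

lemma ringChoose_eq_ascPochhammer_eval_neg {K : Type*} [Field K] [CharZero K] (r : K) (n : ℕ) :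
    Ring.choose r n = (-1) ^ n * ((ascPochhammer K n).eval (-r) / n.factorial) := by
  induction n with
  | zero => simp
  | succ n ih =>
    have hrec := add_one_mul_ringChoose_succ r n
    have hn : (n : K) + 1 ≠ 0 := n.cast_add_one_ne_zero
    have hfac : (n.factorial : K) ≠ 0 := Nat.cast_ne_zero.2 n.factorial_ne_zero
    rw [ih] at hrec
    rw [eq_div_of_mul_eq hn ((mul_comm _ _).trans hrec), ascPochhammer_succ_eval,
      Nat.factorial_succ]
    push_cast
    field_simp
    ring

lemma ringChoose_add_mul_ascPochhammer_eval {K : Type*} [Field K] [CharZero K] (r : K)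
    (m i : ℕ) :
    Ring.choose r (m + i) * (ascPochhammer K i).eval ((m : K) + 1) =
      Ring.choose r m * ((-1) ^ i * (ascPochhammer K i).eval ((m : K) - r)) := by
  induction i with
  | zero => simp
  | succ i ih =>
    have hrec := add_one_mul_ringChoose_succ r (m + i)
    rw [ascPochhammer_succ_eval, ascPochhammer_succ_eval, ← add_assoc]
    push_cast at hrec
    linear_combination (ascPochhammer K i).eval ((m : K) + 1) * hrec + (r - m - i) * ih

/-! ### Fermi-Dirac integrals -/

lemma inv_exp_sub_add_one (x η : ℝ) : (exp (x - η) + 1)⁻¹ = sigmoid (η - x) := by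
  rw [sigmoid_def, neg_sub, add_comm]

lemma integrableOn_rpow_mul_sigmoid_sub {q : ℝ} (hq : -1 < q) (η : ℝ) :
    IntegrableOn (fun x => x ^ q * sigmoid (η - x)) (Set.Ioi 0) := by
  have hΓ := (Real.GammaIntegral_convergent (by linarith : 0 < q + 1)).const_mul (exp η)
  refine hΓ.mono' (by fun_prop) ((ae_restrict_mem measurableSet_Ioi).mono fun x hx => ?_)
  have hx : 0 < x := hx
  have hσ : sigmoid (η - x) ≤ exp η * exp (-x) := by
    rw [← exp_add, ← sub_eq_add_neg, ← neg_sub x η]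
    exact sigmoid_neg_le_exp_neg _
  rw [norm_of_nonneg (mul_nonneg (rpow_nonneg hx.le _) (sigmoid_nonneg _)), add_sub_cancel_right,
    ← mul_assoc, mul_comm]
  gcongr

lemma integrableOn_rpow_mul_sqrt_mul_sigmoid_sub {q β : ℝ} (hq : -1 < q) (hβ : 0 ≤ β) (η : ℝ) :
    IntegrableOn (fun x => x ^ q * √(1 + β * x / 2) * sigmoid (η - x)) (Set.Ioi 0) := by
  have hdom := (integrableOn_rpow_mul_sigmoid_sub hq η).add
    ((integrableOn_rpow_mul_sigmoid_sub (by linarith : -1 < q + 1) η).const_mul (β / 2))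
  refine hdom.mono' (by fun_prop) ((ae_restrict_mem measurableSet_Ioi).mono fun x hx => ?_)
  have hx : 0 < x := hx
  have hσ := sigmoid_nonneg (η - x)
  have hone : 1 ≤ 1 + β * x / 2 := le_add_of_nonneg_right (by positivity)
  have hsqrt : √(1 + β * x / 2) ≤ 1 + β * x / 2 :=
    Real.sqrt_le_iff.2 ⟨by positivity, le_self_pow₀ hone two_ne_zero⟩
  rw [norm_of_nonneg (by positivity)]
  calc x ^ q * √(1 + β * x / 2) * sigmoid (η - x)
      ≤ x ^ q * (1 + β * x / 2) * sigmoid (η - x) := by gcongr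
    _ = x ^ q * sigmoid (η - x) + β / 2 * (x ^ (q + 1) * sigmoid (η - x)) := by
      rw [rpow_add_one hx.ne']
      ring

lemma Fstd_eq_integral_sigmoid (q η : ℝ) :
    Fstd q η = ∫ x in Set.Ioi 0, x ^ q * sigmoid (η - x) := by
  simp only [Fstd, div_eq_mul_inv, inv_exp_sub_add_one]

lemma Frel_eq_integral_sigmoid (q η β : ℝ) :
    Frel q η β = ∫ x in Set.Ioi 0, x ^ q * √(1 + β * x / 2) * sigmoid (η - x) := by
  simp only [Frel, div_eq_mul_inv _ (exp _ + 1), inv_exp_sub_add_one]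

lemma rpow_mul_sqrt_sub_sum_eq_sqrtRemainder (m : ℕ) {c x : ℝ} (hc : 0 < c) (hx : 0 < x) :
    x ^ ((m : ℝ) - 3 / 2) * √(1 + x / c) -
        ∑ j ∈ range m, Ring.choose (1 / 2 : ℝ) j * c ^ ((j : ℝ) - 1 / 2) * x ^ ((m : ℝ) - j - 1) =
      c ^ ((m : ℝ) - 3 / 2) * sqrtRemainder m (x / c) := by
  have hterm (j : ℕ) (hj : j ∈ range m) :
      c ^ ((j : ℝ) - 1 / 2) * x ^ ((m : ℝ) - j - 1) =
        c ^ ((m : ℝ) - 3 / 2) * (x / c) ^ (m - 1 - j) := by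
    have hj := Finset.mem_range.1 hj
    have hexp : ((m - 1 - j : ℕ) : ℝ) = (m : ℝ) - j - 1 := by
      rw [Nat.sub_sub, Nat.cast_sub (by omega)]
      push_cast
      ring
    rw [← rpow_natCast, hexp, div_rpow hx.le hc.le, mul_div_left_comm, ← rpow_sub hc, mul_comm]
    ring_nf
  rw [sqrtRemainder, mul_sub, Finset.mul_sum, div_rpow hx.le hc.le, ← mul_assoc,
    mul_div_cancel₀ _ (rpow_pos_of_pos hc _).ne']
  refine congrArg _ (Finset.sum_congr rfl fun j hj => ?_)
  rw [mul_assoc, hterm j hj]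
  ring

lemma integrableOn_ringChoose_mul_rpow_mul_sigmoid_sub {m j : ℕ} (hj : j ∈ range m) (β η : ℝ) :
    IntegrableOn (fun x => Ring.choose (1 / 2 : ℝ) j * (2 / β) ^ ((j : ℝ) - 1 / 2) *
      x ^ ((m : ℝ) - j - 1) * sigmoid (η - x)) (Set.Ioi 0) := by
  have hj : (j : ℝ) < m := by exact_mod_cast Finset.mem_range.1 hj
  simp only [mul_assoc]
  exact ((integrableOn_rpow_mul_sigmoid_sub (by linarith) η).const_mul _).const_mul _

lemma FR_eq_integral_sigmoid (m : ℕ) (β η : ℝ) :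
    FR m β η = ∫ x in Set.Ioi 0, ∑ j ∈ range m, Ring.choose (1 / 2 : ℝ) j *
      (2 / β) ^ ((j : ℝ) - 1 / 2) * x ^ ((m : ℝ) - j - 1) * sigmoid (η - x) := by
  rw [integral_finsetSum _ fun j hj => integrableOn_ringChoose_mul_rpow_mul_sigmoid_sub hj β η, FR]
  refine Finset.sum_congr rfl fun j _ => ?_
  simp only [mul_assoc, integral_const_mul, Fstd_eq_integral_sigmoid,
    ringChoose_eq_ascPochhammer_eval_neg, neg_div]

lemma rpow_mul_sqrt_mul_sigmoid_sub_sum (m : ℕ) {β x : ℝ} (hβ : 0 < β) (hx : 0 < x) (η : ℝ) :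
    x ^ ((m : ℝ) - 3 / 2) * √(1 + β * x / 2) * sigmoid (η - x) -
        ∑ j ∈ range m, Ring.choose (1 / 2 : ℝ) j * (2 / β) ^ ((j : ℝ) - 1 / 2) *
          x ^ ((m : ℝ) - j - 1) * sigmoid (η - x) =
      (2 / β) ^ ((m : ℝ) - 3 / 2) * sqrtRemainder m (x / (2 / β)) * sigmoid (η - x) := by
  rw [← rpow_mul_sqrt_sub_sum_eq_sqrtRemainder m (by positivity) hx, sub_mul, Finset.sum_mul,
    div_div_eq_mul_div, mul_comm x β]

lemma integrableOn_sqrtRemainder_mul_sigmoid_sub {m : ℕ} (hm : 1 ≤ m) {β : ℝ} (hβ : 0 < β)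
    (η : ℝ) :
    IntegrableOn (fun x => (2 / β) ^ ((m : ℝ) - 3 / 2) * sqrtRemainder m (x / (2 / β)) *
      sigmoid (η - x)) (Set.Ioi 0) := by
  have hm' : (1 : ℝ) ≤ m := by exact_mod_cast hm
  exact ((integrableOn_rpow_mul_sqrt_mul_sigmoid_sub (by linarith) hβ.le η).sub
    (integrable_finsetSum _ fun j hj =>
      integrableOn_ringChoose_mul_rpow_mul_sigmoid_sub hj β η)).congr_fun
    (fun x hx => rpow_mul_sqrt_mul_sigmoid_sub_sum m hβ hx η) measurableSet_Ioi

lemma Frel_sub_FR_eq_integral {m : ℕ} (hm : 1 ≤ m) {β : ℝ} (hβ : 0 < β) (η : ℝ) :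
    Frel ((m : ℝ) - 3 / 2) η β - FR m β η =
      ∫ x in Set.Ioi 0,
        (2 / β) ^ ((m : ℝ) - 3 / 2) * sqrtRemainder m (x / (2 / β)) * sigmoid (η - x) := by
  have hm' : (1 : ℝ) ≤ m := by exact_mod_cast hm
  rw [Frel_eq_integral_sigmoid, FR_eq_integral_sigmoid, ← integral_sub
    (integrableOn_rpow_mul_sqrt_mul_sigmoid_sub (by linarith) hβ.le η)
    (integrable_finsetSum _ fun j hj =>
      integrableOn_ringChoose_mul_rpow_mul_sigmoid_sub hj β η)]
  exact setIntegral_congr_fun measurableSet_Ioi fun x hx =>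
    rpow_mul_sqrt_mul_sigmoid_sub_sum m hβ hx η

lemma ringChoose_add_mul_pow (m i : ℕ) (β : ℝ) :
    Ring.choose (1 / 2 : ℝ) (m + i) * (2 / β) ^ i =
      Ring.choose (1 / 2 : ℝ) m * ((-1) ^ i * i.factorial * Pcoef m i β) := by
  have hpos : 0 < (ascPochhammer ℝ i).eval ((m : ℝ) + 1) := ascPochhammer_pos i _ (by positivity)
  have hfac : (i.factorial : ℝ) ≠ 0 := Nat.cast_ne_zero.2 i.factorial_ne_zero
  rw [Pcoef, eq_div_of_mul_eq hpos.ne' (ringChoose_add_mul_ascPochhammer_eval _ m i)]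
  field_simp

lemma binomialConv_fermiMoment_eq_pcoef (m k : ℕ) (β : ℝ) :
    (binomialConv (fun i => (-1) ^ i * i.factorial * Pcoef m i β) fermiMoment k : ℂ) =
      (-1) ^ k * k.factorial * pcoef m k β := by
  rw [binomialConv, pcoef, Complex.ofReal_sum, Finset.mul_sum]
  symm
  refine Finset.sum_of_injOn (fun j => (k - 2 * j, 2 * j)) ?_ ?_ ?_ ?_
  · intro i _ j _ hij
    simpa using (Prod.ext_iff.1 hij).2
  · intro j hj
    have hj : 2 * j ≤ k := by have := Finset.mem_range.1 hj; omega
    simpa using Nat.sub_add_cancel hj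
  · rintro ⟨i, l⟩ hil hnot
    have hodd : Odd l := by
      by_contra heven
      obtain ⟨j, rfl⟩ := (Nat.not_odd_iff_even.1 heven).two_dvd
      have hik := Finset.HasAntidiagonal.mem_antidiagonal.1 hil
      refine hnot ⟨j, ?_, ?_⟩
      · simp only [Finset.coe_range, Set.mem_Iio]
        omega
      · simp only [Prod.mk.injEq, and_true]
        omega
    simp only [fermiMoment_of_odd hodd, mul_zero, Complex.ofReal_zero]
  · intro j hj
    have hj : 2 * j ≤ k := by have := Finset.mem_range.1 hj; omega
    have hsign : (-1 : ℂ) ^ (k - 2 * j) = (-1) ^ k := by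
      conv_rhs => rw [← Nat.sub_add_cancel hj, pow_add, pow_mul]
      simp
    have hfac : (k.choose (k - 2 * j) : ℂ) * (k - 2 * j).factorial * (2 * j).factorial =
        k.factorial := by
      have h := Nat.choose_mul_factorial_mul_factorial (Nat.sub_le k (2 * j))
      rw [Nat.sub_sub_self hj] at h
      exact_mod_cast h
    push_cast
    rw [fermiMoment_two_mul, hsign, ← hfac]
    ring

lemma Gamma_sub_one_half_eq_ascPochhammer (m : ℕ) :
    Real.Gamma ((m : ℝ) - 1 / 2) = (ascPochhammer ℝ m).eval (-1 / 2 : ℝ) * Real.Gamma (-1 / 2) := by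
  induction m with
  | zero => norm_num
  | succ m ih =>
    have hne : (m : ℝ) - 1 / 2 ≠ 0 := fun h => by
      have h' : ((2 * m : ℕ) : ℝ) = (1 : ℕ) := by push_cast; linarith
      have := Nat.cast_injective h'
      omega
    rw [ascPochhammer_succ_eval, Nat.cast_add_one, add_sub_right_comm, Real.Gamma_add_one hne, ih]
    ring

lemma Gamma_mul_Acoef (m : ℕ) :
    Real.Gamma ((m : ℝ) - 1 / 2) * Acoef m = -Ring.choose (1 / 2 : ℝ) m := by
  have hΓ : Real.Gamma (-1 / 2) ≠ 0 := by
    have h := Gamma_sub_one_half_eq_ascPochhammer 1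
    intro h0
    rw [h0, mul_zero] at h
    exact (Real.Gamma_pos_of_pos (by norm_num)).ne' h
  have hfac : (m.factorial : ℝ) ≠ 0 := Nat.cast_ne_zero.2 m.factorial_ne_zero
  rw [Gamma_sub_one_half_eq_ascPochhammer, Acoef, ringChoose_eq_ascPochhammer_eval_neg, pow_succ,
    neg_div]
  rw [neg_div] at hΓ
  generalize Real.Gamma (-(1 / 2)) = G at hΓ ⊢
  field_simp

lemma hasLogExpansion_Frel_sub_FR {m : ℕ} (hm : 1 ≤ m) {β : ℝ} (hβ : 0 < β) :
    HasLogExpansion (fun η => Frel ((m : ℝ) - 3 / 2) η β - FR m β η)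
      (Ring.choose (1 / 2 : ℝ) m * (2 / β) ^ ((m : ℝ) - 1 / 2) *
        (eulerMascheroniConstant - q0coef m β))
      (binomialConv (fun i => Ring.choose (1 / 2 : ℝ) m * (2 / β) ^ ((m : ℝ) - 1 / 2) *
        ((-1) ^ i * i.factorial * Pcoef m i β)) fermiMoment) := by
  obtain ⟨n, rfl⟩ := Nat.exists_eq_add_of_le' hm
  have hc : 0 < 2 / β := by positivity
  have hpow : (2 / β) ^ (((n + 1 : ℕ) : ℝ) - 1 / 2) =
      (2 / β) ^ (((n + 1 : ℕ) : ℝ) - 3 / 2) * (2 / β) := by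
    rw [← rpow_add_one hc.ne']
    ring_nf
  have hG := ((hasLogExpansion_sqrtRemainderPrimitive n).comp_div_const hc).const_mul
    ((2 / β) ^ (((n + 1 : ℕ) : ℝ) - 1 / 2))
  have h := hG.integral_Ioi_mul_sigmoid_sub ?_ ?_ (fun x hx => ?_)
    (integrableOn_sqrtRemainder_mul_sigmoid_sub hm hβ)
  · simp only [← Frel_sub_FR_eq_integral hm hβ, ringChoose_add_mul_pow] at h
    convert h using 1
    · rw [q0coef, digamma_one]
      push_cast
      ring_nf
    · congr 1
      ext i
      ring
  · exact ((continuousOn_sqrtRemainderPrimitive n).comp (continuous_id.div_const _).continuousOn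
      fun x hx => div_nonneg hx hc.le).const_mul _
  · simp only [zero_div, sqrtRemainderPrimitive_apply_zero, mul_zero]
  · refine (((hasDerivAt_sqrtRemainderPrimitive n (div_pos hx hc)).comp x
      ((hasDerivAt_id' x).div_const _)).const_mul _).congr_deriv ?_
    rw [hpow]
    field_simp

/-! ### Exponential smallness of `F^{(S)}` -/

lemma integrableOn_one_add_pow_mul_exp_neg (n : ℕ) {z : ℝ} (hz : 0 < z) :
    IntegrableOn (fun t => (1 + t) ^ n * exp (-z * t)) (Set.Ioi 0) := by
  have hterm (k : ℕ) :
      IntegrableOn (fun t => n.choose k * (t ^ (k : ℝ) * exp (-z * t))) (Set.Ioi 0) := by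
    have h := integrableOn_rpow_mul_exp_neg_mul_rpow (p := 1)
      (by linarith [k.cast_nonneg (α := ℝ)] : -1 < (k : ℝ)) one_pos hz
    simp only [rpow_one] at h
    exact h.const_mul _
  refine (integrable_finsetSum (range (n + 1)) fun k _ => hterm k).congr (.of_forall fun t => ?_)
  simp only [rpow_natCast, add_comm 1 t, add_pow, one_pow, mul_one, Finset.sum_mul]
  exact Finset.sum_congr rfl fun k _ => by ring

lemma integrableOn_Ubig (m : ℕ) {z : ℝ} (hz : 0 < z) :
    IntegrableOn (fun t => exp (-z * t) * t ^ (1 / 2 : ℝ) * (1 + t) ^ ((m : ℝ) - 3 / 2))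
      (Set.Ioi 0) := by
  refine (integrableOn_one_add_pow_mul_exp_neg (m + 1) hz).mono' (by fun_prop)
    ((ae_restrict_mem measurableSet_Ioi).mono fun t ht => ?_)
  have ht : 0 < t := ht
  have hone : 1 ≤ 1 + t := by linarith
  have hhalf : t ^ (1 / 2 : ℝ) ≤ 1 + t := by
    rw [← sqrt_eq_rpow]
    exact Real.sqrt_le_iff.2 ⟨by positivity, by nlinarith⟩
  have hpow : (1 + t) ^ ((m : ℝ) - 3 / 2) ≤ (1 + t) ^ m := by
    rw [← rpow_natCast]
    exact rpow_le_rpow_of_exponent_le hone (by linarith)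
  rw [norm_of_nonneg (by positivity)]
  calc exp (-z * t) * t ^ (1 / 2 : ℝ) * (1 + t) ^ ((m : ℝ) - 3 / 2)
      ≤ exp (-z * t) * (1 + t) * (1 + t) ^ m := by gcongr
    _ = (1 + t) ^ (m + 1) * exp (-z * t) := by ring

lemma Ubig_nonneg (m : ℕ) (z : ℝ) : 0 ≤ Ubig m z :=
  mul_nonneg (one_div_nonneg.2 (Gamma_nonneg_of_nonneg (by norm_num)))
    (setIntegral_nonneg measurableSet_Ioi fun t (ht : 0 < t) => by positivity)

lemma antitoneOn_Ubig (m : ℕ) : AntitoneOn (Ubig m) (Set.Ioi 0) := by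
  intro z hz w hw hzw
  refine mul_le_mul_of_nonneg_left (setIntegral_mono_on (integrableOn_Ubig m hw)
    (integrableOn_Ubig m hz) measurableSet_Ioi fun t (ht : 0 < t) => ?_)
    (one_div_nonneg.2 (Gamma_nonneg_of_nonneg (by norm_num)))
  gcongr

lemma isBigO_FS_exp_neg (m : ℕ) {β : ℝ} (hβ : 0 < β) : FS m β =O[atTop] fun η => exp (-η) := by
  refine IsBigO.const_mul_left (.of_bound (Ubig m (2 / β) * (1 - exp (-1))⁻¹) ?_) _
  filter_upwards [eventually_ge_atTop 1] with η hη
  have hgeom := (hasSum_geometric_of_lt_one (exp_pos (-1)).le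
    (Real.exp_lt_one_iff.2 (by norm_num))).mul_left (exp (-η) * Ubig m (2 / β))
  rw [norm_of_nonneg (exp_pos _).le]
  refine (tsum_of_norm_bounded hgeom fun n => ?_).trans_eq (by ring)
  have hU : Ubig m (2 * ((n : ℝ) + 1) / β) ≤ Ubig m (2 / β) := by
    refine antitoneOn_Ubig m (Set.mem_Ioi.2 (by positivity)) (Set.mem_Ioi.2 (by positivity)) ?_
    gcongr
    linarith [n.cast_nonneg (α := ℝ)]
  have hexp : exp (-((n : ℝ) + 1) * η - 2 * ((n : ℝ) + 1) / β) ≤ exp (-η) * exp (-1) ^ n := by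
    rw [← exp_nat_mul, ← exp_add, exp_le_exp]
    have : 0 ≤ 2 * ((n : ℝ) + 1) / β := by positivity
    nlinarith [n.cast_nonneg (α := ℝ)]
  rw [norm_mul, norm_mul, norm_pow, norm_neg, norm_one, one_pow, one_mul,
    norm_of_nonneg (exp_pos _).le, norm_of_nonneg (Ubig_nonneg _ _), mul_right_comm]
  exact mul_le_mul hexp hU (Ubig_nonneg _ _) (by positivity)

lemma isBigO_FS (m : ℕ) {β : ℝ} (hβ : 0 < β) (N : ℕ) :
    FS m β =O[atTop] fun η => (η ^ N)⁻¹ := by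
  refine (isBigO_FS_exp_neg m hβ).trans
    ((isLittleO_exp_neg_mul_rpow_atTop one_pos (-N)).isBigO.congr' (.of_forall fun η => ?_) ?_)
  · simp only [neg_mul, one_mul]
  · filter_upwards [eventually_ge_atTop 0] with η hη
    rw [rpow_neg hη, rpow_natCast]

/-! ### The asymptotic expansion -/

lemma binomialConv_const_mul (A : ℝ) (a μ : ℕ → ℝ) (k : ℕ) :
    binomialConv (fun i => A * a i) μ k = A * binomialConv a μ k := by
  rw [binomialConv, binomialConv, Finset.mul_sum]
  exact Finset.sum_congr rfl fun p _ => by ring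

lemma logPartialSum_eq_sum_Icc (L : ℝ) (a : ℕ → ℝ) (N : ℕ) (x : ℝ) :
    logPartialSum L a N x =
      L + a 0 * log x - ∑ i ∈ Finset.Icc 1 (N - 1), a i / (i * x ^ i) := by
  have hsub : Finset.Icc 1 (N - 1) ⊆ range N := fun i hi => by
    have := Finset.mem_Icc.1 hi
    exact Finset.mem_range.2 (by omega)
  rw [logPartialSum, ← Finset.sum_subset hsub fun i hi hi' => ?_]
  have hzero : i = 0 := by
    simp only [Finset.mem_range, Finset.mem_Icc] at hi hi'
    omega
  rw [hzero, Nat.cast_zero, zero_mul, div_zero]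

lemma pcoef_zero (m : ℕ) (β : ℝ) : pcoef m 0 β = 1 := by
  simp [pcoef, tau2, Pcoef]

lemma logPartialSum_binomialConv_fermiMoment (m N : ℕ) (A β η : ℝ) :
    (logPartialSum (A * (eulerMascheroniConstant - q0coef m β))
      (binomialConv (fun i => A * ((-1) ^ i * i.factorial * Pcoef m i β)) fermiMoment) N η : ℂ) =
    -A * (-((eulerMascheroniConstant + log η : ℝ) : ℂ) * pcoef m 0 β + q0coef m β +
      ∑ k ∈ Finset.Icc 1 (N - 1), (-1 : ℂ) ^ k * pcoef m k β * ((k - 1).factorial : ℂ) *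
        (η : ℂ) ^ (-(k : ℤ))) := by
  have hcoeff (k : ℕ) :
      (binomialConv (fun i => A * ((-1) ^ i * i.factorial * Pcoef m i β)) fermiMoment k : ℂ) =
        A * ((-1) ^ k * k.factorial * pcoef m k β) := by
    rw [binomialConv_const_mul, Complex.ofReal_mul, binomialConv_fermiMoment_eq_pcoef]
  have hterm (k : ℕ) (hk : k ∈ Finset.Icc 1 (N - 1)) :
      (A * ((-1) ^ k * k.factorial * pcoef m k β) / (k * (η : ℂ) ^ k) : ℂ) =
        A * ((-1 : ℂ) ^ k * pcoef m k β * ((k - 1).factorial : ℂ) * (η : ℂ) ^ (-(k : ℤ))) := by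
    have hk0 : k ≠ 0 := Nat.one_le_iff_ne_zero.1 (Finset.mem_Icc.1 hk).1
    have hk0' : (k : ℂ) ≠ 0 := Nat.cast_ne_zero.2 hk0
    rw [← Nat.mul_factorial_pred hk0, zpow_neg, zpow_natCast]
    push_cast
    field_simp
  rw [logPartialSum_eq_sum_Icc]
  push_cast
  simp only [hcoeff]
  rw [Finset.sum_congr rfl hterm, ← Finset.mul_sum, pcoef_zero, Nat.factorial_zero]
  push_cast
  ring

theorem stmt9_general (m : ℕ) (hm : 1 ≤ m) (β : ℝ) (hβ : 0 < β) (N : ℕ) :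
    (fun η : ℝ => (Frel ((m : ℝ) - 3 / 2) η β : ℂ) - ((FR m β η : ℝ) : ℂ) -
        ((FS m β η : ℝ) : ℂ) -
        ((Real.Gamma ((m : ℝ) - 1 / 2) * (2 / β) ^ ((m : ℝ) - 1 / 2) * Acoef m : ℝ) : ℂ) *
          (-(((Real.eulerMascheroniConstant + Real.log η : ℝ)) : ℂ) * pcoef m 0 β +
            ((q0coef m β : ℝ) : ℂ) +
            ∑ k ∈ Finset.Icc 1 (N - 1),
              (-1 : ℂ) ^ k * pcoef m k β * ((k - 1).factorial : ℂ) *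
                (η : ℂ) ^ (-(k : ℤ)))) =O[atTop]
      (fun η : ℝ => η ^ (-(N : ℝ))) := by
  have h := (hasLogExpansion_Frel_sub_FR hm hβ N).sub (isBigO_FS m hβ N)
  rw [← Complex.isBigO_ofReal_left] at h
  have hA : Real.Gamma ((m : ℝ) - 1 / 2) * (2 / β) ^ ((m : ℝ) - 1 / 2) * Acoef m =
      -(Ring.choose (1 / 2 : ℝ) m * (2 / β) ^ ((m : ℝ) - 1 / 2)) := by
    rw [mul_right_comm, Gamma_mul_Acoef, neg_mul]
  refine h.congr' (.of_forall fun η => ?_) ?_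
  · beta_reduce
    rw [Complex.ofReal_sub, Complex.ofReal_sub, logPartialSum_binomialConv_fermiMoment, hA]
    push_cast
    ring
  · filter_upwards [eventually_ge_atTop 0] with η hη
    rw [rpow_neg hη, rpow_natCast]

theorem stmt9 (m : ℕ) (hm : 2 ≤ m) (β : ℝ) (hβ : 0 < β) :
    ∀ N : ℕ, 1 ≤ N →
      (fun η : ℝ => (Frel ((m : ℝ) - 3 / 2) η β : ℂ) - ((FR m β η : ℝ) : ℂ) -
          ((FS m β η : ℝ) : ℂ) -
          ((Real.Gamma ((m : ℝ) - 1 / 2) * (2 / β) ^ ((m : ℝ) - 1 / 2) * Acoef m : ℝ) : ℂ) *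
            (-(((Real.eulerMascheroniConstant + Real.log η : ℝ)) : ℂ) * pcoef m 0 β +
              ((q0coef m β : ℝ) : ℂ) +
              ∑ k ∈ Finset.Icc 1 (N - 1),
                (-1 : ℂ) ^ k * pcoef m k β * ((k - 1).factorial : ℂ) *
                  (η : ℂ) ^ (-(k : ℤ)))) =O[atTop]
        (fun η : ℝ => η ^ (-(N : ℝ))) :=
  fun N _ => stmt9_general m (one_le_two.trans hm) β hβ N
end

section
/- Let m ≥ 2 be an integer, let η ∈ ℝ be fixed, and let 0 < c < 1. Define A_m = (−1)^{m+1}/(m! Γ(−1/2)), F_q^{(P)}(η,β) = (A_m/(2π)) ∫_{-∞}^∞ e^{η(c+it)} Log(c+it) (π/sin(π(c+it))) M(m−1/2; m+1; 2(c+it)/β) dt (principal branch of the logarithm), Ψ_k(η) = (1/2) ∫_{-∞}^∞ Log(c+it) e^{η(c+it)} (c+it)^k / sin(π(c+it)) dt, and P̃_{m,k} = 2^k (m−1/2)_k/(k! (m+1)_k). Then for every integer N ≥ 1, as β → +∞, F_q^{(P)}(η,β) − A_m Σ_{k=0}^{N−1} P̃_{m,k} β^{−k} Ψ_k(η) = O(β^{−N}).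 -/
open Real MeasureTheory Set Finset Filter Asymptotics

/-- Kummer's confluent hypergeometric function `M(a;b;z)` as a power series. -/
noncomputable def kummerM (a b z : ℂ) : ℂ :=
  ∑' k : ℕ, (ascPochhammer ℂ k).eval a /
      ((ascPochhammer ℂ k).eval b * (k.factorial : ℂ)) * z ^ k

/-- The function `F_q^{(P)}(η,β)` (principal branch of the complex logarithm). -/
noncomputable def FP (m : ℕ) (c η β : ℝ) : ℂ :=
  (((Acoef m : ℝ) : ℂ) / (2 * (π : ℂ))) * ∫ t : ℝ,
    Complex.exp ((η : ℂ) * ((c : ℂ) + t * Complex.I)) *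
      Complex.log ((c : ℂ) + t * Complex.I) *
      ((π : ℂ) / Complex.sin ((π : ℂ) * ((c : ℂ) + t * Complex.I))) *
      kummerM ((m : ℂ) - 1 / 2) ((m : ℂ) + 1)
        (2 * ((c : ℂ) + t * Complex.I) / (β : ℂ))

/-- The auxiliary function `Ψ_k(η)`. -/
noncomputable def Psi (c : ℝ) (k : ℕ) (η : ℝ) : ℂ :=
  (1 / 2 : ℂ) * ∫ t : ℝ, Complex.log ((c : ℂ) + t * Complex.I) *
      Complex.exp ((η : ℂ) * ((c : ℂ) + t * Complex.I)) *
      ((c : ℂ) + t * Complex.I) ^ k / Complex.sin ((π : ℂ) * ((c : ℂ) + t * Complex.I))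

/-- `P̃_{m,k} = 2^k (m−1/2)_k/(k! (m+1)_k)`. -/
noncomputable def Ptilde (m k : ℕ) : ℝ :=
  2 ^ k * (ascPochhammer ℝ k).eval ((m : ℝ) - 1 / 2) /
    (k.factorial * (ascPochhammer ℝ k).eval ((m : ℝ) + 1))

/-!
Since `‖sin (π (c + it))‖` grows like `e^{π|t|}`, the kernel `e^{ηs} Log s / sin (πs)` stays
integrable along `Re s = c` after multiplication by `e^{δ‖s‖}`, for every `δ < π`. The `k`-th
Taylor coefficient of `z ↦ M(m - 1/2; m + 1; 2z)` is at most `2^k / k!` in absolute value. Hence,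
as soon as `2 ≤ δβ`, the Taylor remainder of order `N` at `s/β` is at most `(2/(δβ))^N e^{δ‖s‖}`,
and integrating this bound against the kernel gives `O(β^{-N})`.
-/

section TaylorRemainder

variable {𝕜 : Type*} [NormedField 𝕜] {a : ℕ → 𝕜} {C r : ℝ}

lemma norm_sub_sum_range_le_pow_mul_exp (hr : 0 ≤ r) (ha : ∀ k, ‖a k‖ ≤ C * (r ^ k / k.factorial))
    {z w : 𝕜} (hw : HasSum (fun k => a k * z ^ k) w) {ε y : ℝ} (hε₀ : 0 ≤ ε) (hε₁ : ε ≤ 1)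
    (hy : 0 ≤ y) (hz : r * ‖z‖ ≤ ε * y) (N : ℕ) :
    ‖w - ∑ k ∈ Finset.range N, a k * z ^ k‖ ≤ C * ε ^ N * Real.exp y := by
  have hC : 0 ≤ C := by simpa using (norm_nonneg _).trans (ha 0)
  have hterm (k : ℕ) : ‖a (k + N) * z ^ (k + N)‖ ≤
      C * ε ^ N * (y ^ (k + N) / (k + N).factorial) :=
    calc ‖a (k + N) * z ^ (k + N)‖
        ≤ C * (r ^ (k + N) / (k + N).factorial) * ‖z‖ ^ (k + N) := by
          rw [norm_mul, norm_pow]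
          gcongr
          exact ha _
      _ = C * ((r * ‖z‖) ^ (k + N) / (k + N).factorial) := by rw [mul_pow]; ring
      _ ≤ C * ((ε * y) ^ (k + N) / (k + N).factorial) := by gcongr
      _ = C * ε ^ (k + N) * (y ^ (k + N) / (k + N).factorial) := by rw [mul_pow]; ring
      _ ≤ C * ε ^ N * (y ^ (k + N) / (k + N).factorial) := by
          gcongr C * ?_ * _
          exact pow_le_pow_of_le_one hε₀ hε₁ (Nat.le_add_left N k)
  have hexp : HasSum (fun k : ℕ => y ^ k / k.factorial) (Real.exp y) := by
    simpa only [Real.exp_eq_exp_ℝ] using NormedSpace.expSeries_div_hasSum_exp y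
  have htail := ((hasSum_nat_add_iff' N).2 hexp).mul_left (C * ε ^ N)
  refine (((hasSum_nat_add_iff' N).2 hw).norm_le_of_bounded htail hterm).trans ?_
  gcongr
  exact sub_le_self _ (Finset.sum_nonneg fun k _ => by positivity)

end TaylorRemainder

section WeightedIntegral

variable {α : Type*} [MeasurableSpace α] {μ : Measure α} {G s : α → ℂ} {δ : ℝ}

lemma integrable_mul_pow_of_integrable_norm_mul_exp (hδ : 0 < δ) (hG : AEStronglyMeasurable G μ)
    (hs : AEStronglyMeasurable s μ) (hGs : Integrable (fun t => ‖G t‖ * Real.exp (δ * ‖s t‖)) μ)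
    (k : ℕ) : Integrable (fun t => G t * s t ^ k) μ := by
  refine (hGs.const_mul (k.factorial / δ ^ k)).mono' (hG.mul (hs.pow k)) (.of_forall fun t => ?_)
  have hpow : ‖s t‖ ^ k ≤ k.factorial / δ ^ k * Real.exp (δ * ‖s t‖) :=
    calc ‖s t‖ ^ k = k.factorial / δ ^ k * ((δ * ‖s t‖) ^ k / k.factorial) := by
          rw [mul_pow]; field_simp
      _ ≤ k.factorial / δ ^ k * Real.exp (δ * ‖s t‖) := by
          gcongr
          exact Real.pow_div_factorial_le_exp _ (by positivity) k
  calc ‖G t * s t ^ k‖ = ‖G t‖ * ‖s t‖ ^ k := by rw [norm_mul, norm_pow]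
    _ ≤ ‖G t‖ * (k.factorial / δ ^ k * Real.exp (δ * ‖s t‖)) := by gcongr
    _ = k.factorial / δ ^ k * (‖G t‖ * Real.exp (δ * ‖s t‖)) := by ring

variable {a : ℕ → ℂ} {f : ℂ → ℂ} {C r β : ℝ}

lemma norm_mul_sub_sum_range_le (hr : 0 ≤ r) (hδ : 0 < δ)
    (ha : ∀ k, ‖a k‖ ≤ C * (r ^ k / k.factorial)) (hf : ∀ z, HasSum (fun k => a k * z ^ k) (f z))
    (hβ : 0 < β) (hrβ : r ≤ δ * β) (N : ℕ) (g z : ℂ) :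
    ‖g * (f (z / β) - ∑ k ∈ Finset.range N, a k * (z / β) ^ k)‖ ≤
      C * (r / (δ * β)) ^ N * (‖g‖ * Real.exp (δ * ‖z‖)) := by
  have hz : r * ‖z / (β : ℂ)‖ ≤ r / (δ * β) * (δ * ‖z‖) := by
    rw [norm_div, Complex.norm_of_nonneg hβ.le]
    exact le_of_eq (by field_simp)
  have hrem := norm_sub_sum_range_le_pow_mul_exp hr ha (hf (z / β)) (by positivity)
    (div_le_one_of_le₀ hrβ (by positivity)) (by positivity) hz N
  calc _ ≤ ‖g‖ * (C * (r / (δ * β)) ^ N * Real.exp (δ * ‖z‖)) := by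
        rw [norm_mul]
        gcongr
    _ = _ := by ring

lemma integrable_mul_comp_div (hr : 0 ≤ r) (hδ : 0 < δ)
    (ha : ∀ k, ‖a k‖ ≤ C * (r ^ k / k.factorial)) (hf : ∀ z, HasSum (fun k => a k * z ^ k) (f z))
    (hG : AEStronglyMeasurable G μ) (hs : AEStronglyMeasurable s μ)
    (hGs : Integrable (fun t => ‖G t‖ * Real.exp (δ * ‖s t‖)) μ) (hβ : 0 < β) (hrβ : r ≤ δ * β) :
    Integrable (fun t => G t * f (s t / β)) μ := by
  have hf_meas : Measurable f :=
    measurable_of_tendsto_metrizable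
      (f := fun (n : ℕ) (z : ℂ) => ∑ k ∈ Finset.range n, a k * z ^ k) (fun n => by fun_prop)
      (tendsto_pi_nhds.2 fun z => (hf z).tendsto_sum_nat)
  have hfs : AEStronglyMeasurable (fun t => f (s t / β)) μ :=
    (hf_meas.comp_aemeasurable (hs.aemeasurable.div_const _)).aestronglyMeasurable
  refine (hGs.const_mul C).mono' (hG.mul hfs) (.of_forall fun t => ?_)
  simpa using norm_mul_sub_sum_range_le hr hδ ha hf hβ hrβ 0 (G t) (s t)

lemma integral_mul_comp_div_sub_sum_range (hr : 0 ≤ r) (hδ : 0 < δ)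
    (ha : ∀ k, ‖a k‖ ≤ C * (r ^ k / k.factorial)) (hf : ∀ z, HasSum (fun k => a k * z ^ k) (f z))
    (hG : AEStronglyMeasurable G μ) (hs : AEStronglyMeasurable s μ)
    (hGs : Integrable (fun t => ‖G t‖ * Real.exp (δ * ‖s t‖)) μ) (hβ : 0 < β) (hrβ : r ≤ δ * β)
    (N : ℕ) :
    ∫ t, G t * f (s t / β) ∂μ -
        ∑ k ∈ Finset.range N, a k * (β : ℂ) ^ (-(k : ℤ)) * ∫ t, G t * s t ^ k ∂μ =
      ∫ t, G t * (f (s t / β) - ∑ k ∈ Finset.range N, a k * (s t / β) ^ k) ∂μ := by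
  have hpow (k : ℕ) : Integrable (fun t => a k * (β : ℂ) ^ (-(k : ℤ)) * (G t * s t ^ k)) μ :=
    (integrable_mul_pow_of_integrable_norm_mul_exp hδ hG hs hGs k).const_mul _
  have hexpand (t : α) : G t * (f (s t / β) - ∑ k ∈ Finset.range N, a k * (s t / β) ^ k) =
      G t * f (s t / β) -
        ∑ k ∈ Finset.range N, a k * (β : ℂ) ^ (-(k : ℤ)) * (G t * s t ^ k) := by
    rw [mul_sub, Finset.mul_sum]
    congr! 2 with k
    rw [zpow_neg, zpow_natCast, div_pow]
    ring
  simp_rw [hexpand, ← integral_const_mul]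
  rw [integral_sub (integrable_mul_comp_div hr hδ ha hf hG hs hGs hβ hrβ)
    (integrable_finsetSum _ fun k _ => hpow k), integral_finsetSum _ fun k _ => hpow k]

theorem isBigO_integral_mul_comp_div_sub_sum_range (hr : 0 ≤ r) (hδ : 0 < δ)
    (ha : ∀ k, ‖a k‖ ≤ C * (r ^ k / k.factorial)) (hf : ∀ z, HasSum (fun k => a k * z ^ k) (f z))
    (hG : AEStronglyMeasurable G μ) (hs : AEStronglyMeasurable s μ)
    (hGs : Integrable (fun t => ‖G t‖ * Real.exp (δ * ‖s t‖)) μ) (N : ℕ) :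
    (fun β : ℝ => ∫ t, G t * f (s t / β) ∂μ -
        ∑ k ∈ Finset.range N, a k * (β : ℂ) ^ (-(k : ℤ)) * ∫ t, G t * s t ^ k ∂μ) =O[atTop]
      (fun β : ℝ => β ^ (-(N : ℝ))) := by
  refine .of_bound (C * (r / δ) ^ N * ∫ t, ‖G t‖ * Real.exp (δ * ‖s t‖) ∂μ) ?_
  filter_upwards [eventually_gt_atTop 0, eventually_ge_atTop (r / δ)] with β hβ hβr
  have hrβ : r ≤ δ * β := (div_le_iff₀' hδ).1 hβr
  rw [integral_mul_comp_div_sub_sum_range hr hδ ha hf hG hs hGs hβ hrβ]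
  calc _ ≤ ∫ t, C * (r / (δ * β)) ^ N * (‖G t‖ * Real.exp (δ * ‖s t‖)) ∂μ :=
        norm_integral_le_of_norm_le (hGs.const_mul _) (.of_forall fun t =>
          norm_mul_sub_sum_range_le hr hδ ha hf hβ hrβ N (G t) (s t))
    _ = _ := by
        rw [integral_const_mul, Real.norm_of_nonneg (by positivity), Real.rpow_neg hβ.le,
          Real.rpow_natCast, ← div_div, div_pow]
        ring

end WeightedIntegral

section Kummer

lemma norm_ascPochhammer_eval_le {a b : ℂ} (hab : ‖a‖ ≤ b.re) (k : ℕ) :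
    ‖(ascPochhammer ℂ k).eval a‖ ≤ ‖(ascPochhammer ℂ k).eval b‖ := by
  induction k with
  | zero => simp
  | succ k ih =>
    have hfactor : ‖a + k‖ ≤ ‖b + k‖ :=
      calc ‖a + k‖ ≤ ‖a‖ + k := by simpa using norm_add_le a k
        _ ≤ (b + k).re := by simpa using hab
        _ ≤ ‖b + k‖ := Complex.re_le_norm _
    simp only [ascPochhammer_succ_eval, norm_mul]
    gcongr

lemma norm_kummerM_term_le {a b : ℂ} (hab : ‖a‖ ≤ b.re) (k : ℕ) (z : ℂ) :
    ‖(ascPochhammer ℂ k).eval a / ((ascPochhammer ℂ k).eval b * (k.factorial : ℂ)) * z ^ k‖ ≤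
      ‖z‖ ^ k / k.factorial := by
  have hratio : ‖(ascPochhammer ℂ k).eval a‖ / ‖(ascPochhammer ℂ k).eval b‖ ≤ 1 :=
    div_le_one_of_le₀ (norm_ascPochhammer_eval_le hab k) (norm_nonneg _)
  calc _ = ‖(ascPochhammer ℂ k).eval a‖ / ‖(ascPochhammer ℂ k).eval b‖ *
        (‖z‖ ^ k / k.factorial) := by
        rw [norm_mul, norm_div, norm_mul, norm_pow, Complex.norm_natCast]
        ring
    _ ≤ ‖z‖ ^ k / k.factorial := mul_le_of_le_one_left (by positivity) hratio

lemma hasSum_kummerM {a b : ℂ} (hab : ‖a‖ ≤ b.re) (z : ℂ) :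
    HasSum (fun k : ℕ => (ascPochhammer ℂ k).eval a /
      ((ascPochhammer ℂ k).eval b * (k.factorial : ℂ)) * z ^ k) (kummerM a b z) :=
  (Summable.of_norm_bounded (Real.summable_pow_div_factorial ‖z‖) fun k =>
    norm_kummerM_term_le hab k z).hasSum

lemma ofReal_ascPochhammer_eval (k : ℕ) (x : ℝ) :
    (((ascPochhammer ℝ k).eval x : ℝ) : ℂ) = (ascPochhammer ℂ k).eval (x : ℂ) := by
  rw [← Complex.ofRealHom_eq_coe, ← Polynomial.eval₂_at_apply, ← ascPochhammer_eval₂,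
    Complex.ofRealHom_eq_coe]

lemma ofReal_Ptilde (m k : ℕ) :
    (Ptilde m k : ℂ) = (ascPochhammer ℂ k).eval ((m : ℂ) - 1 / 2) /
      ((ascPochhammer ℂ k).eval ((m : ℂ) + 1) * (k.factorial : ℂ)) * 2 ^ k := by
  simp only [Ptilde, Complex.ofReal_div, Complex.ofReal_mul, ofReal_ascPochhammer_eval]
  push_cast
  ring

lemma norm_natCast_sub_half_le_re (m : ℕ) : ‖(m : ℂ) - 1 / 2‖ ≤ ((m : ℂ) + 1).re := by
  have hcast : (m : ℂ) - 1 / 2 = ((m - 1 / 2 : ℝ) : ℂ) := by push_cast; rfl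
  rw [hcast, Complex.norm_real, Real.norm_eq_abs, abs_le]
  simp only [Complex.add_re, Complex.natCast_re, Complex.one_re]
  constructor <;> linarith [m.cast_nonneg (α := ℝ)]

lemma norm_Ptilde_le (m k : ℕ) : ‖(Ptilde m k : ℂ)‖ ≤ 2 ^ k / k.factorial := by
  simpa only [ofReal_Ptilde, Complex.norm_ofNat] using
    norm_kummerM_term_le (norm_natCast_sub_half_le_re m) k 2

lemma hasSum_Ptilde_mul_pow (m : ℕ) (z : ℂ) :
    HasSum (fun k => (Ptilde m k : ℂ) * z ^ k)
      (kummerM ((m : ℂ) - 1 / 2) ((m : ℂ) + 1) (2 * z)) := by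
  simpa only [ofReal_Ptilde, mul_pow, mul_assoc] using
    hasSum_kummerM (norm_natCast_sub_half_le_re m) (2 * z)

end Kummer

section Contour

/-- The parametrisation `t ↦ c + it` of the vertical line `Re s = c`, the contour of integration. -/
noncomputable def verticalLine (c t : ℝ) : ℂ := (c : ℂ) + t * Complex.I

/-- The factor `e^{ηs} Log s / sin (πs)` common to the integrands of `FP` and `Psi`. -/
noncomputable def contourKernel (η : ℝ) (s : ℂ) : ℂ :=
  Complex.exp (η * s) * Complex.log s / Complex.sin (π * s)

lemma verticalLine_re (c t : ℝ) : (verticalLine c t).re = c := by simp [verticalLine]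

lemma verticalLine_im (c t : ℝ) : (verticalLine c t).im = t := by simp [verticalLine]

lemma measurable_verticalLine (c : ℝ) : Measurable (verticalLine c) := by
  unfold verticalLine
  fun_prop

lemma measurable_contourKernel (η : ℝ) : Measurable (contourKernel η) := by
  unfold contourKernel
  fun_prop

lemma norm_verticalLine_le (c t : ℝ) : ‖verticalLine c t‖ ≤ |c| + |t| := by
  simpa only [verticalLine_re, verticalLine_im] using
    Complex.norm_le_abs_re_add_abs_im (verticalLine c t)

lemma FP_eq_integral_contourKernel (m : ℕ) (c η β : ℝ) :
    FP m c η β = (Acoef m : ℂ) / 2 * ∫ t : ℝ, contourKernel η (verticalLine c t) *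
      kummerM ((m : ℂ) - 1 / 2) ((m : ℂ) + 1) (2 * (verticalLine c t / β)) := by
  have hπ : (π : ℂ) ≠ 0 := Complex.ofReal_ne_zero.2 Real.pi_ne_zero
  have hA : (Acoef m : ℂ) / 2 = (Acoef m : ℂ) / (2 * π) * π := by field_simp
  rw [hA, mul_assoc, ← integral_const_mul, FP]
  congr! 3
  rw [contourKernel, verticalLine, mul_div_assoc 2]
  ring

lemma Psi_eq_integral_contourKernel (c η : ℝ) (k : ℕ) :
    Psi c k η =
      1 / 2 * ∫ t : ℝ, contourKernel η (verticalLine c t) * verticalLine c t ^ k := by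
  rw [Psi]
  congr! 3
  rw [contourKernel, verticalLine]
  ring

lemma abs_sin_re_mul_cosh_im_le_norm_sin (z : ℂ) :
    |Real.sin z.re| * Real.cosh z.im ≤ ‖Complex.sin z‖ := by
  have hre : (Complex.sin z).re = Real.sin z.re * Real.cosh z.im := by
    rw [Complex.sin_eq]
    simp [Complex.sin_ofReal_re, Complex.cosh_ofReal_re]
  calc |Real.sin z.re| * Real.cosh z.im = |(Complex.sin z).re| := by
        rw [hre, abs_mul, abs_of_pos (Real.cosh_pos _)]
    _ ≤ ‖Complex.sin z‖ := Complex.abs_re_le_norm _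

lemma exp_abs_div_two_le_cosh (x : ℝ) : Real.exp |x| / 2 ≤ Real.cosh x := by
  rw [← Real.cosh_abs, Real.cosh_eq]
  linarith [Real.exp_pos (-|x|)]

lemma abs_sin_div_two_mul_exp_le_norm_sin (c t : ℝ) :
    |Real.sin (π * c)| / 2 * Real.exp (π * |t|) ≤ ‖Complex.sin (π * verticalLine c t)‖ :=
  calc |Real.sin (π * c)| / 2 * Real.exp (π * |t|)
      = |Real.sin (π * c)| * (Real.exp |π * t| / 2) := by
        rw [abs_mul, abs_of_pos Real.pi_pos]
        ring
    _ ≤ |Real.sin (π * c)| * Real.cosh (π * t) := by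
        gcongr
        exact exp_abs_div_two_le_cosh _
    _ ≤ ‖Complex.sin (π * verticalLine c t)‖ := by
        simpa [verticalLine_re, verticalLine_im] using
          abs_sin_re_mul_cosh_im_le_norm_sin (π * verticalLine c t)

lemma abs_log_le_add_inv {x : ℝ} (hx : 0 < x) : |Real.log x| ≤ x + x⁻¹ := by
  have hinv : 0 < x⁻¹ := inv_pos.2 hx
  rw [abs_le]
  constructor
  · linarith [Real.one_sub_inv_le_log_of_pos hx]
  · linarith [Real.log_le_sub_one_of_pos hx]

lemma norm_log_le_norm_add_inv_add_pi {z : ℂ} (hz : z ≠ 0) : ‖Complex.log z‖ ≤ ‖z‖ + ‖z‖⁻¹ + π :=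
  calc ‖Complex.log z‖ ≤ |(Complex.log z).re| + |(Complex.log z).im| :=
        Complex.norm_le_abs_re_add_abs_im _
    _ = |Real.log ‖z‖| + |z.arg| := by rw [Complex.log_re, Complex.log_im]
    _ ≤ ‖z‖ + ‖z‖⁻¹ + π :=
        add_le_add (abs_log_le_add_inv (norm_pos_iff.2 hz)) (Complex.abs_arg_le_pi z)

lemma exists_norm_log_verticalLine_le {c ε : ℝ} (hc : c ≠ 0) (hε : 0 < ε) :
    ∃ K, ∀ t, ‖Complex.log (verticalLine c t)‖ ≤ K * Real.exp (ε * |t|) := by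
  refine ⟨|c| + |c|⁻¹ + π + ε⁻¹, fun t => ?_⟩
  have hc₀ : 0 < |c| := abs_pos.2 hc
  have hle : |c| ≤ ‖verticalLine c t‖ := by
    simpa only [verticalLine_re] using Complex.abs_re_le_norm (verticalLine c t)
  have hinv : ‖verticalLine c t‖⁻¹ ≤ |c|⁻¹ := inv_anti₀ hc₀ hle
  have hexp : 1 ≤ Real.exp (ε * |t|) := Real.one_le_exp (by positivity)
  have ht : |t| ≤ ε⁻¹ * Real.exp (ε * |t|) := by
    rw [← div_eq_inv_mul, le_div_iff₀' hε]
    linarith [Real.add_one_le_exp (ε * |t|)]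
  calc ‖Complex.log (verticalLine c t)‖
      ≤ ‖verticalLine c t‖ + ‖verticalLine c t‖⁻¹ + π :=
        norm_log_le_norm_add_inv_add_pi (norm_pos_iff.1 (hc₀.trans_le hle))
    _ ≤ (|c| + |c|⁻¹ + π) * 1 + |t| := by linarith [norm_verticalLine_le c t]
    _ ≤ (|c| + |c|⁻¹ + π) * Real.exp (ε * |t|) + ε⁻¹ * Real.exp (ε * |t|) := by gcongr
    _ = (|c| + |c|⁻¹ + π + ε⁻¹) * Real.exp (ε * |t|) := by ring

lemma integrable_exp_neg_mul_abs {b : ℝ} (hb : 0 < b) :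
    Integrable (fun t : ℝ => Real.exp (-b * |t|)) := by
  refine .of_integral_ne_zero ?_
  rw [integral_comp_abs (f := fun x => Real.exp (-b * x)), integral_exp_mul_Ioi (neg_lt_zero.2 hb)]
  simp [hb.ne']

variable {c : ℝ}

lemma exists_norm_contourKernel_verticalLine_le (hc : ∀ n : ℤ, (n : ℝ) ≠ c) (η : ℝ) {ε : ℝ}
    (hε : 0 < ε) :
    ∃ K, ∀ t, ‖contourKernel η (verticalLine c t)‖ ≤ K * Real.exp ((ε - π) * |t|) := by
  have hsin : Real.sin (π * c) ≠ 0 := Real.sin_ne_zero_iff.2 fun n hn =>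
    hc n (mul_right_cancel₀ Real.pi_ne_zero (hn.trans (mul_comm _ _)))
  obtain ⟨K, hK⟩ := exists_norm_log_verticalLine_le (by simpa using (hc 0).symm) hε
  refine ⟨Real.exp (η * c) * K / (|Real.sin (π * c)| / 2), fun t => ?_⟩
  have hexp : ‖Complex.exp (η * verticalLine c t)‖ = Real.exp (η * c) := by
    rw [Complex.norm_exp, Complex.re_ofReal_mul, verticalLine_re]
  calc ‖contourKernel η (verticalLine c t)‖
      ≤ Real.exp (η * c) * (K * Real.exp (ε * |t|)) /
          (|Real.sin (π * c)| / 2 * Real.exp (π * |t|)) := by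
        rw [contourKernel, norm_div, norm_mul, hexp]
        gcongr
        · exact mul_nonneg (Real.exp_pos _).le ((norm_nonneg _).trans (hK t))
        · exact hK t
        · exact abs_sin_div_two_mul_exp_le_norm_sin c t
    _ = Real.exp (η * c) * K / (|Real.sin (π * c)| / 2) * Real.exp ((ε - π) * |t|) := by
        rw [sub_mul, Real.exp_sub]
        field_simp

lemma integrable_norm_contourKernel_mul_exp (hc : ∀ n : ℤ, (n : ℝ) ≠ c) (η : ℝ) {δ : ℝ}
    (hδ₀ : 0 ≤ δ) (hδ : δ < π) :
    Integrable fun t =>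
      ‖contourKernel η (verticalLine c t)‖ * Real.exp (δ * ‖verticalLine c t‖) := by
  obtain ⟨ε, hε, hεπ⟩ : ∃ ε, 0 < ε ∧ ε < π - δ := exists_between (sub_pos.2 hδ)
  obtain ⟨K, hK⟩ := exists_norm_contourKernel_verticalLine_le hc η hε
  have hbound : 0 < π - δ - ε := sub_pos.2 hεπ
  refine ((integrable_exp_neg_mul_abs hbound).const_mul (K * Real.exp (δ * |c|))).mono' ?_
    (.of_forall fun t => ?_)
  · have hline := measurable_verticalLine c
    exact ((measurable_contourKernel η).comp hline).norm.mul
      (Real.measurable_exp.comp (hline.norm.const_mul δ)) |>.aestronglyMeasurable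
  rw [Real.norm_of_nonneg (by positivity)]
  calc ‖contourKernel η (verticalLine c t)‖ * Real.exp (δ * ‖verticalLine c t‖)
      ≤ K * Real.exp ((ε - π) * |t|) * Real.exp (δ * (|c| + |t|)) := by
        gcongr
        · exact (norm_nonneg _).trans (hK t)
        · exact hK t
        · exact norm_verticalLine_le c t
    _ = K * Real.exp (δ * |c|) * Real.exp (-(π - δ - ε) * |t|) := by
        rw [mul_assoc, mul_assoc, ← Real.exp_add, ← Real.exp_add]
        ring_nf

end Contour

theorem stmt13_general (m : ℕ) {c : ℝ} (hc : ∀ n : ℤ, (n : ℝ) ≠ c) (η : ℝ) (N : ℕ) :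
    (fun β : ℝ => FP m c η β -
        ((Acoef m : ℝ) : ℂ) * ∑ k ∈ Finset.range N,
          ((Ptilde m k : ℝ) : ℂ) * (β : ℂ) ^ (-(k : ℤ)) * Psi c k η) =O[atTop]
      (fun β : ℝ => β ^ (-(N : ℝ))) := by
  have hδ : (1 : ℝ) < π := by linarith [Real.pi_gt_three]
  have hline := measurable_verticalLine c
  have hexpansion := isBigO_integral_mul_comp_div_sub_sum_range (C := 1) zero_le_two
    one_pos (fun k => (norm_Ptilde_le m k).trans_eq (one_mul _).symm) (hasSum_Ptilde_mul_pow m)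
    ((measurable_contourKernel η).comp hline).aestronglyMeasurable hline.aestronglyMeasurable
    (integrable_norm_contourKernel_mul_exp hc η zero_le_one hδ) N
  refine (hexpansion.const_mul_left ((Acoef m : ℂ) / 2)).congr_left fun β => ?_
  simp only [FP_eq_integral_contourKernel, Psi_eq_integral_contourKernel, mul_sub, Finset.mul_sum,
    Function.comp_apply]
  congr! 2 with k
  ring

theorem stmt13 (m : ℕ) (hm : 2 ≤ m) (c η : ℝ) (hc0 : 0 < c) (hc1 : c < 1) :
    ∀ N : ℕ, 1 ≤ N →
      (fun β : ℝ => FP m c η β -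
          ((Acoef m : ℝ) : ℂ) * ∑ k ∈ Finset.range N,
            ((Ptilde m k : ℝ) : ℂ) * (β : ℂ) ^ (-(k : ℤ)) * Psi c k η) =O[atTop]
        (fun β : ℝ => β ^ (-(N : ℝ))) :=
  fun N _ => stmt13_general m (fun n hn => by subst hn; norm_cast at hc0 hc1; omega) η N
end

section
/- Let −1 < q < ∞ with q not a nonnegative integer, let η ∈ ℝ, and set μ = q+1. Define f(θ) = [e^{−η−cos θ} cos(μθ + sin θ) + cos(μθ)] / [1 + 2 e^{−η−cos θ} cos(sin θ) + e^{−2η−2cos θ}]. Then (1/Γ(q+1)) ∫_0^1 x^q/(e^{x−η}+1) dx = (Γ(−q)/π) ∫_0^π f(θ) dθ. -/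
open Real MeasureTheory Set

/- If `f` is analytic on the closed unit disc and `0 < re s`, collapsing the unit circle onto the
two sides of the cut `[0, 1]` gives
`2 sin(πs) ∫₀¹ x^(s-1) f(x) dx = ∫_{-π}^π e^{isθ} f(-e^{iθ}) dθ`.
This can be checked on the Taylor series of `f`, since for `f(z) = zⁿ` both sides are
`2 sin(πs) / (s + n)`. For the Fermi function `f(z) = 1 / (e^{z-η} + 1)` and `s = q + 1`, adding
the contributions of `θ` and `-θ` gives twice the claimed integrand, and Euler's reflection formula
turns `1 / Γ(s)` into `Γ(1 - s) sin(πs) / π`. -/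

section PowerSeries

variable {E : Type*} [NormedAddCommGroup E] [NormedSpace ℂ E] [CompleteSpace E]

lemma exists_summable_norm_hasSum_pow_smul {f : ℂ → E}
    (hf : AnalyticOnNhd ℂ f (Metric.closedBall 0 1)) :
    ∃ a : ℕ → E, Summable (fun n => ‖a n‖) ∧
      ∀ z : ℂ, ‖z‖ ≤ 1 → HasSum (fun n => z ^ n • a n) (f z) := by
  obtain ⟨δ, hδ, hsub⟩ := (isCompact_closedBall (0 : ℂ) 1).exists_thickening_subset_open
    (isOpen_analyticAt ℂ f) hf
  rw [thickening_closedBall hδ zero_le_one] at hsub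
  obtain ⟨R, hR₁, hR⟩ := exists_between (lt_add_of_pos_left (1 : ℝ) hδ)
  lift R to NNReal using zero_le_one.trans hR₁.le
  have hdiff : DifferentiableOn ℂ f (Metric.closedBall 0 R) := fun z hz =>
    (hsub (Metric.closedBall_subset_ball hR hz)).differentiableAt.differentiableWithinAt
  have hp := hdiff.hasFPowerSeriesOnBall (zero_lt_one.trans hR₁)
  refine ⟨(cauchyPowerSeries f 0 R).coeff, ?_, fun z hz => ?_⟩
  · have hrad : ((1 : NNReal) : ENNReal) < (cauchyPowerSeries f 0 R).radius :=
      lt_of_lt_of_le (by exact_mod_cast hR₁) hp.r_le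
    simpa using (cauchyPowerSeries f 0 R).summable_norm_mul_pow hrad
  · have hz' : z ∈ Metric.eball (0 : ℂ) R := by
      simpa [Metric.eball_coe] using hz.trans_lt hR₁
    simpa using hp.hasSum hz'

variable {a : ℕ → E} {f : ℂ → E} {s : ℂ}

lemma hasSum_integral_cpow_smul (hs : 0 < s.re) (ha : Summable fun n => ‖a n‖)
    (hf : ∀ z : ℂ, ‖z‖ ≤ 1 → HasSum (fun n => z ^ n • a n) (f z)) :
    HasSum (fun n : ℕ => (s + n)⁻¹ • a n) (∫ x in (0 : ℝ)..1, (x : ℂ) ^ (s - 1) • f x) := by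
  have hterm (n : ℕ) : ∫ x in (0 : ℝ)..1, (x : ℂ) ^ (s - 1 + n) • a n = (s + n)⁻¹ • a n := by
    have hre : 0 < (s + n).re := by simpa using add_pos_of_pos_of_nonneg hs n.cast_nonneg
    have hne : s + n ≠ 0 := fun h => by simp [h] at hre
    have hre' : -1 < (s - 1 + n).re := by
      rw [sub_add_eq_add_sub, Complex.sub_re, Complex.one_re]
      linarith
    rw [intervalIntegral.integral_smul_const, integral_cpow (.inl hre'), sub_add_eq_add_sub,
      sub_add_cancel]
    simp [Complex.zero_cpow hne]
  simp_rw [← hterm]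
  refine intervalIntegral.hasSum_integral_of_dominated_convergence
    (fun n x => x ^ (s.re - 1) * ‖a n‖) (fun n => ?_) (fun n => ?_) ?_ ?_ ?_
  · exact Measurable.aestronglyMeasurable (by fun_prop) |>.smul_const _
  · refine .of_forall fun x hx => ?_
    rw [uIoc_of_le zero_le_one] at hx
    rw [norm_smul, Complex.norm_cpow_eq_rpow_re_of_pos hx.1]
    gcongr ?_ * _
    exact Real.rpow_le_rpow_of_exponent_ge hx.1 hx.2 (by simp)
  · exact .of_forall fun x _ => ha.mul_left _
  · simp_rw [tsum_mul_left]
    exact (intervalIntegral.intervalIntegrable_rpow' (by linarith)).mul_const _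
  · refine .of_forall fun x hx => ?_
    rw [uIoc_of_le zero_le_one] at hx
    have hx₀ : (x : ℂ) ≠ 0 := Complex.ofReal_ne_zero.mpr hx.1.ne'
    have hx₁ : ‖(x : ℂ)‖ ≤ 1 := by simpa [abs_of_pos hx.1] using hx.2
    simpa only [Complex.cpow_add _ _ hx₀, Complex.cpow_natCast, mul_smul]
      using (hf x hx₁).const_smul ((x : ℂ) ^ (s - 1))

lemma integral_cexp_mul_I_symm (hs : s ≠ 0) :
    ∫ θ in -π..π, Complex.exp (s * θ * Complex.I) = 2 * Complex.sin (π * s) / s := by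
  simp_rw [mul_right_comm s _ Complex.I]
  rw [integral_exp_mul_complex (mul_ne_zero hs Complex.I_ne_zero), Complex.two_sin,
    div_eq_div_iff (mul_ne_zero hs Complex.I_ne_zero) hs]
  push_cast
  ring_nf
  rw [Complex.I_sq]
  ring

lemma integral_cexp_mul_neg_cexp_pow {n : ℕ} (hs : s ≠ -n) :
    ∫ θ in -π..π, Complex.exp (s * θ * Complex.I) * (-Complex.exp (θ * Complex.I)) ^ n =
      2 * Complex.sin (π * s) * (s + n)⁻¹ := by
  have hne : s + n ≠ 0 := fun h => hs (eq_neg_of_add_eq_zero_left h)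
  have hpow (θ : ℝ) : Complex.exp (s * θ * Complex.I) * (-Complex.exp (θ * Complex.I)) ^ n =
      (-1) ^ n * Complex.exp ((s + n) * θ * Complex.I) := by
    rw [neg_pow, ← Complex.exp_nat_mul, mul_left_comm, ← Complex.exp_add]
    ring_nf
  have hsin : Complex.sin (π * (s + n)) = (-1) ^ n * Complex.sin (π * s) := by
    rw [mul_add, mul_comm (π : ℂ) n, Complex.sin_antiperiodic.add_nat_mul_eq]
  have hsign : (-1 : ℂ) ^ n * (-1) ^ n = 1 := by simp [← mul_pow]
  simp_rw [hpow]
  rw [intervalIntegral.integral_const_mul, integral_cexp_mul_I_symm hne, hsin]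
  linear_combination 2 * Complex.sin (π * s) * (s + n)⁻¹ * hsign

lemma hasSum_integral_cexp_smul (hs : ∀ n : ℕ, s ≠ -n) (ha : Summable fun n => ‖a n‖)
    (hf : ∀ z : ℂ, ‖z‖ ≤ 1 → HasSum (fun n => z ^ n • a n) (f z)) :
    HasSum (fun n : ℕ => (2 * Complex.sin (π * s)) • (s + n)⁻¹ • a n)
      (∫ θ in -π..π, Complex.exp (s * θ * Complex.I) • f (-Complex.exp (θ * Complex.I))) := by
  simp_rw [smul_smul, ← integral_cexp_mul_neg_cexp_pow (hs _),
    ← intervalIntegral.integral_smul_const]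
  have hcont : Continuous fun θ : ℝ => Complex.exp (s * θ * Complex.I) := by fun_prop
  refine intervalIntegral.hasSum_integral_of_dominated_convergence
    (fun n θ => ‖Complex.exp (s * θ * Complex.I)‖ * ‖a n‖) (fun n => ?_) (fun n => ?_) ?_ ?_ ?_
  · exact Continuous.aestronglyMeasurable (by fun_prop)
  · refine .of_forall fun θ _ => ?_
    simp [norm_smul, Complex.norm_exp_ofReal_mul_I]
  · exact .of_forall fun θ _ => ha.mul_left _
  · simp_rw [tsum_mul_left]
    exact (hcont.norm.mul continuous_const).intervalIntegrable _ _
  · refine .of_forall fun θ _ => ?_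
    have hθ : ‖-Complex.exp (θ * Complex.I)‖ ≤ 1 := by simp [Complex.norm_exp_ofReal_mul_I]
    simpa only [mul_smul] using (hf _ hθ).const_smul (Complex.exp (s * θ * Complex.I))

theorem two_mul_sin_smul_integral_cpow_smul (hs : 0 < s.re)
    (hf : AnalyticOnNhd ℂ f (Metric.closedBall 0 1)) :
    (2 * Complex.sin (π * s)) • ∫ x in (0 : ℝ)..1, (x : ℂ) ^ (s - 1) • f x =
      ∫ θ in -π..π, Complex.exp (s * θ * Complex.I) • f (-Complex.exp (θ * Complex.I)) := by
  obtain ⟨a, ha, hfa⟩ := exists_summable_norm_hasSum_pow_smul hf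
  have hs' (n : ℕ) : s ≠ -n := fun h => hs.not_ge (by simp [h])
  exact ((hasSum_integral_cpow_smul hs ha hfa).const_smul _).unique
    (hasSum_integral_cexp_smul hs' ha hfa)

end PowerSeries

lemma integral_symm_eq_integral_add_comp_neg {E : Type*} [NormedAddCommGroup E] [NormedSpace ℝ E]
    {f : ℝ → E} {a : ℝ} (hf : IntervalIntegrable f volume (-a) a) :
    ∫ x in -a..a, f x = ∫ x in 0..a, (f x + f (-x)) := by
  have h₀ : (0 : ℝ) ∈ uIcc (-a) a := by
    rcases le_total 0 a with h | h <;> simp [h]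
  have hl : IntervalIntegrable f volume (-a) 0 := hf.mono_set (uIcc_subset_uIcc_left h₀)
  have hr : IntervalIntegrable f volume 0 a := hf.mono_set (uIcc_subset_uIcc_right h₀)
  have hl' : IntervalIntegrable (fun x => f (-x)) volume 0 a := by
    simpa using (IntervalIntegrable.iff_comp_neg (by simp)).mp hl.symm
  rw [intervalIntegral.integral_add hr hl', intervalIntegral.integral_comp_neg, neg_zero, add_comm,
    intervalIntegral.integral_add_adjacent_intervals hl hr]

lemma cexp_neg_cexp_mul_I_sub (η θ : ℂ) :
    Complex.exp (-Complex.exp (θ * Complex.I) - η) =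
      Complex.exp (-η - Complex.cos θ) * Complex.exp (-Complex.sin θ * Complex.I) := by
  rw [← Complex.exp_add, Complex.exp_mul_I]
  ring_nf

lemma cexp_div_add_cexp_neg_div {s η θ : ℂ}
    (h : Complex.exp (-Complex.exp (θ * Complex.I) - η) + 1 ≠ 0)
    (h' : Complex.exp (-Complex.exp (-θ * Complex.I) - η) + 1 ≠ 0) :
    Complex.exp (s * θ * Complex.I) / (Complex.exp (-Complex.exp (θ * Complex.I) - η) + 1) +
      Complex.exp (s * -θ * Complex.I) / (Complex.exp (-Complex.exp (-θ * Complex.I) - η) + 1) =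
    2 * ((Complex.exp (-η - Complex.cos θ) * Complex.cos (s * θ + Complex.sin θ) +
            Complex.cos (s * θ)) /
          (1 + 2 * Complex.exp (-η - Complex.cos θ) * Complex.cos (Complex.sin θ) +
            Complex.exp (-2 * η - 2 * Complex.cos θ))) := by
  rw [cexp_neg_cexp_mul_I_sub] at h h' ⊢
  rw [cexp_neg_cexp_mul_I_sub η (-θ)]
  rw [Complex.cos_neg, Complex.sin_neg, neg_neg] at h' ⊢
  set r := Complex.exp (-η - Complex.cos θ) with hr
  set u := Complex.exp (Complex.sin θ * Complex.I) with hu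
  set v := Complex.exp (-Complex.sin θ * Complex.I) with hv
  set w := Complex.exp (s * θ * Complex.I) with hw
  set w' := Complex.exp (s * -θ * Complex.I) with hw'
  have hr_sq : Complex.exp (-2 * η - 2 * Complex.cos θ) = r ^ 2 := by
    rw [hr, ← Complex.exp_nat_mul]
    push_cast
    ring_nf
  have huv : u * v = 1 := by rw [hu, hv, ← Complex.exp_add]; simp
  have hcos : 2 * Complex.cos (Complex.sin θ) = u + v := Complex.two_cos _
  have hcos_s : 2 * Complex.cos (s * θ) = w + w' := by
    rw [Complex.two_cos, hw, hw']
    ring_nf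
  have hcos_add : 2 * Complex.cos (s * θ + Complex.sin θ) = w * u + w' * v := by
    rw [Complex.two_cos, hw, hw', hu, hv, ← Complex.exp_add, ← Complex.exp_add]
    ring_nf
  have hden : 1 + 2 * r * Complex.cos (Complex.sin θ) + r ^ 2 = (r * v + 1) * (r * u + 1) := by
    linear_combination r * hcos - r ^ 2 * huv
  rw [hr_sq, hden, div_add_div _ _ h h', ← mul_div_assoc]
  congr 1
  linear_combination -r * hcos_add - hcos_s

lemma inv_Gamma_eq_Gamma_one_sub_mul_sin {s : ℂ} (hs : ∀ n : ℕ, s ≠ n + 1) :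
    (Complex.Gamma s)⁻¹ = Complex.Gamma (1 - s) / π * Complex.sin (π * s) := by
  have hΓ : Complex.Gamma (1 - s) ≠ 0 :=
    Complex.Gamma_ne_zero fun n h => hs n (by linear_combination -h)
  rw [div_mul_eq_mul_div, mul_div_assoc, ← inv_div (π : ℂ), ← Complex.Gamma_mul_Gamma_one_sub,
    mul_inv, mul_left_comm, mul_inv_cancel₀ hΓ, mul_one]

lemma exp_sub_ofReal_add_one_ne_zero (η : ℝ) {z : ℂ} (hz : |z.im| < π / 2) :
    Complex.exp (z - η) + 1 ≠ 0 := by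
  intro h
  have hre : Real.exp (z.re - η) * Real.cos z.im + 1 = 0 := by
    simpa [Complex.exp_re] using congrArg Complex.re h
  have hcos : 0 < Real.cos z.im := Real.cos_pos_of_mem_Ioo (abs_lt.mp hz)
  have hpos : 0 < Real.exp (z.re - η) * Real.cos z.im := by positivity
  linarith

lemma ofReal_integral_rpow_div_exp_add_one (q η : ℝ) {b : ℝ} (hb : 0 ≤ b) :
    ((∫ x in (0 : ℝ)..b, x ^ q / (Real.exp (x - η) + 1) : ℝ) : ℂ) =
      ∫ x in (0 : ℝ)..b, (x : ℂ) ^ (q : ℂ) / (Complex.exp (x - η) + 1) := by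
  rw [← intervalIntegral.integral_ofReal]
  refine intervalIntegral.integral_congr fun x hx => ?_
  rw [uIcc_of_le hb] at hx
  simp [Complex.ofReal_cpow hx.1]

theorem stmt17_general (q η : ℂ) (hq : -1 < q.re) (hqi : ∀ n : ℕ, q ≠ n)
    (hη : ∀ z : ℂ, ‖z‖ ≤ 1 → Complex.exp (z - η) + 1 ≠ 0) :
    (1 / Complex.Gamma (q + 1)) * ∫ x in (0 : ℝ)..1, (x : ℂ) ^ q / (Complex.exp (x - η) + 1) =
      (Complex.Gamma (-q) / π) * ∫ θ in (0 : ℝ)..π,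
        (Complex.exp (-η - Complex.cos θ) * Complex.cos ((q + 1) * θ + Complex.sin θ) +
            Complex.cos ((q + 1) * θ)) /
          (1 + 2 * Complex.exp (-η - Complex.cos θ) * Complex.cos (Complex.sin θ) +
            Complex.exp (-2 * η - 2 * Complex.cos θ)) := by
  have hden (θ : ℝ) : Complex.exp (-Complex.exp (θ * Complex.I) - η) + 1 ≠ 0 :=
    hη _ (by simp [Complex.norm_exp_ofReal_mul_I])
  have hanalytic : AnalyticOnNhd ℂ (fun z => (Complex.exp (z - η) + 1)⁻¹)
      (Metric.closedBall 0 1) := fun z hz => by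
    have := hη z (by simpa using hz)
    fun_prop (disch := assumption)
  have hcont : Continuous fun θ : ℝ => Complex.exp ((q + 1) * θ * Complex.I) /
      (Complex.exp (-Complex.exp (θ * Complex.I) - η) + 1) := by
    fun_prop (disch := exact hden _)
  have hloop : 2 * Complex.sin (π * (q + 1)) *
      ∫ x in (0 : ℝ)..1, (x : ℂ) ^ q / (Complex.exp (x - η) + 1) =
      ∫ θ in -π..π, Complex.exp ((q + 1) * θ * Complex.I) /
        (Complex.exp (-Complex.exp (θ * Complex.I) - η) + 1) := by
    simpa only [smul_eq_mul, add_sub_cancel_right, div_eq_mul_inv] using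
      two_mul_sin_smul_integral_cpow_smul (s := q + 1)
        (by simpa using neg_lt_iff_pos_add.mp hq) hanalytic
  have hfold (θ : ℝ) := cexp_div_add_cexp_neg_div (s := q + 1) (hden θ) (by simpa using hden (-θ))
  rw [integral_symm_eq_integral_add_comp_neg (hcont.intervalIntegrable _ _), mul_assoc] at hloop
  simp only [Complex.ofReal_neg, hfold, intervalIntegral.integral_const_mul] at hloop
  rw [one_div, inv_Gamma_eq_Gamma_one_sub_mul_sin fun n h => hqi n (add_right_cancel h),
    sub_add_cancel_right, mul_assoc, mul_left_cancel₀ two_ne_zero hloop]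

theorem stmt17 (q η : ℝ) (hq : -1 < q) (hqi : ∀ n : ℕ, q ≠ n) :
    (1 / Real.Gamma (q + 1)) * ∫ x in (0 : ℝ)..1, x ^ q / (Real.exp (x - η) + 1) =
      (Real.Gamma (-q) / π) * ∫ θ in (0 : ℝ)..π,
        (Real.exp (-η - Real.cos θ) * Real.cos ((q + 1) * θ + Real.sin θ) +
            Real.cos ((q + 1) * θ)) /
          (1 + 2 * Real.exp (-η - Real.cos θ) * Real.cos (Real.sin θ) +
            Real.exp (-2 * η - 2 * Real.cos θ)) := by
  have h := stmt17_general q η (by simpa) (by exact_mod_cast hqi) fun z hz =>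
    exp_sub_ofReal_add_one_ne_zero η (by linarith [z.abs_im_le_norm, Real.pi_gt_three])
  rw [← Complex.ofReal_inj, Complex.ofReal_mul,
    ofReal_integral_rpow_div_exp_add_one q η zero_le_one, Complex.ofReal_mul,
    ← intervalIntegral.integral_ofReal]
  push_cast [← Complex.Gamma_ofReal]
  exact h
end

section
/- For every nonnegative integer k, the function z ↦ 1/Γ(z) (which is entire) has derivative at z = −k equal to (−1)^k k!; equivalently, the derivative of q ↦ 1/Γ(q+1) at q = −k−1 equals (−1)^k k!. -/
/-!
Iterating the functional equation gives `1 / Γ(z) = (z + k) * h(z)` with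
`h(z) = z (z + 1) ⋯ (z + k - 1) / Γ(z + k + 1)` entire. This holds at the poles too, where
`Γ` has the junk value `0` and so `1 / Γ` its true value `0`. The factor `z + k` vanishes at
`z = -k`, so the derivative there is `h(-k) = (-k) (-k + 1) ⋯ (-1) / Γ(1) = (-1) ^ k * k!`.
-/

theorem ascPochhammer_eval_neg_natCast_self (R : Type*) [Ring R] (k : ℕ) :
    (ascPochhammer R k).eval (-(k : R)) = (-1) ^ k * k.factorial := by
  rw [ascPochhammer_eval_neg_eq_descPochhammer, descPochhammer_eval_eq_descFactorial,
    Nat.descFactorial_self]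

theorem inv_Gamma_eq_ascPochhammer_eval_mul (z : ℂ) (n : ℕ) :
    (Complex.Gamma z)⁻¹ = (ascPochhammer ℂ n).eval z * (Complex.Gamma (z + n))⁻¹ := by
  induction n with
  | zero => simp
  | succ n ih =>
    rw [ih, Complex.one_div_Gamma_eq_self_mul_one_div_Gamma_add_one, ascPochhammer_succ_eval,
      Nat.cast_add_one, add_assoc, mul_assoc]

theorem hasDerivAt_sub_smul_self {𝕜 E : Type*} [NontriviallyNormedField 𝕜] [NormedAddCommGroup E]
    [NormedSpace 𝕜 E] {f : 𝕜 → E} {a : 𝕜} (hf : ContinuousAt f a) :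
    HasDerivAt (fun z => (z - a) • f z) (f a) a := by
  rw [hasDerivAt_iff_tendsto_slope]
  refine (hf.tendsto.mono_left nhdsWithin_le_nhds).congr' ?_
  filter_upwards [self_mem_nhdsWithin] with z hz
  exact (slope_sub_smul f (Ne.symm hz)).symm

theorem hasDerivAt_inv_Gamma_neg_natCast (k : ℕ) :
    HasDerivAt (fun z : ℂ => (Complex.Gamma z)⁻¹) ((-1) ^ k * k.factorial) (-(k : ℂ)) := by
  let h (z : ℂ) : ℂ := (ascPochhammer ℂ k).eval z * (Complex.Gamma (z + (k + 1 : ℕ)))⁻¹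
  have factorization (z : ℂ) : (Complex.Gamma z)⁻¹ = (z - -(k : ℂ)) * h z := by
    rw [inv_Gamma_eq_ascPochhammer_eval_mul z (k + 1), ascPochhammer_succ_eval, sub_neg_eq_add,
      mul_comm (Polynomial.eval z _), mul_assoc]
  have h_continuous : Continuous h :=
    (ascPochhammer ℂ k).continuous.mul
      (Complex.differentiable_one_div_Gamma.continuous.comp (continuous_add_const _))
  have h_neg : h (-(k : ℂ)) = (-1) ^ k * k.factorial := by
    simp [h, ascPochhammer_eval_neg_natCast_self]
  rw [funext factorization, ← h_neg]
  exact hasDerivAt_sub_smul_self h_continuous.continuousAt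

theorem stmt18 (k : ℕ) :
    HasDerivAt (fun z : ℂ => 1 / Complex.Gamma z)
        ((-1 : ℂ) ^ k * k.factorial) (-(k : ℂ)) ∧
    HasDerivAt (fun q : ℂ => 1 / Complex.Gamma (q + 1))
        ((-1 : ℂ) ^ k * k.factorial) (-(k : ℂ) - 1) := by
  simp only [one_div]
  have deriv_at_pole := hasDerivAt_inv_Gamma_neg_natCast k
  refine ⟨deriv_at_pole,
    HasDerivAt.comp_add_const (f := fun z : ℂ => (Complex.Gamma z)⁻¹) (-(k : ℂ) - 1) 1 ?_⟩
  rwa [sub_add_cancel]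
end

section
/- Let η ∈ ℝ and k ∈ ℕ, and for real q define G(q) = (1/Γ(q+1)) ∫_1^∞ x^q/(e^{x−η}+1) dx (the integral converging for every real q, and 1/Γ(q+1) = 0 at q = −1,−2,...). Then G is differentiable at q = −k−1 and G'(−k−1) = (−1)^k k! ∫_1^∞ x^{−k−1}/(e^{x−η}+1) dx. -/
open Real MeasureTheory Set

/-!
Let `F q = ∫ x in Ioi c, x ^ q • f x` with `0 < c` and `f` rapidly decaying. Since `1 / Γ (q + 1)`
vanishes at `q = -k - 1`, the difference quotient there of `(1 / Γ (q + 1)) • F q` is that of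
`1 / Γ (q + 1)` times `F q`, so only the continuity of `F` is needed and the derivative is
`(1 / Γ)' (-k) • F (-k - 1)`. Differentiating `1 / Γ s = s / Γ (s + 1)` relates `(1 / Γ)' (-k - 1)`
to `(1 / Γ)' (-k)` and yields `(1 / Γ)' (-k) = (-1) ^ k * k!`.
-/

open Filter Asymptotics Topology

section Product

variable {𝕜 E : Type*} [NontriviallyNormedField 𝕜] [NormedAddCommGroup E] [NormedSpace 𝕜 E]

lemma slope_smul_of_eq_zero {g : 𝕜 → 𝕜} {a : 𝕜} (hga : g a = 0) (F : 𝕜 → E) (x : 𝕜) :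
    slope (fun x ↦ g x • F x) a x = slope g a x • F x := by
  simp only [slope_def_module, hga, zero_smul, sub_zero, smul_eq_mul, mul_smul]

lemma hasDerivAt_smul_of_eq_zero {g : 𝕜 → 𝕜} {g' a : 𝕜} {F : 𝕜 → E} (hg : HasDerivAt g g' a)
    (hga : g a = 0) (hF : ContinuousAt F a) : HasDerivAt (fun x ↦ g x • F x) (g' • F a) a := by
  rw [hasDerivAt_iff_tendsto_slope] at hg ⊢
  exact (hg.smul (hF.tendsto.mono_left nhdsWithin_le_nhds)).congr fun x ↦
    (slope_smul_of_eq_zero hga F x).symm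

end Product

lemma deriv_complexGamma_inv_eq (s : ℂ) :
    deriv (fun z ↦ (Complex.Gamma z)⁻¹) s =
      (Complex.Gamma (s + 1))⁻¹ + s * deriv (fun z ↦ (Complex.Gamma z)⁻¹) (s + 1) := by
  have hshift := (Complex.differentiable_one_div_Gamma (s + 1)).hasDerivAt.comp_add_const s 1
  have hmul := ((hasDerivAt_id' s).mul hshift).deriv
  rw [one_mul] at hmul
  rw [← hmul]
  exact congrArg (deriv · s) (funext Complex.one_div_Gamma_eq_self_mul_one_div_Gamma_add_one)

lemma deriv_complexGamma_inv_neg_nat (k : ℕ) :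
    deriv (fun z ↦ (Complex.Gamma z)⁻¹) (-k) = (-1) ^ k * k.factorial := by
  induction k with
  | zero => simp [deriv_complexGamma_inv_eq 0]
  | succ k ih =>
    have hk : -((k + 1 : ℕ) : ℂ) + 1 = -k := by push_cast; ring
    rw [deriv_complexGamma_inv_eq, hk, ih, Complex.Gamma_neg_nat_eq_zero, Nat.factorial_succ]
    push_cast
    ring

lemma hasDerivAt_realGamma_inv_neg_nat (k : ℕ) :
    HasDerivAt (fun s : ℝ ↦ (Gamma s)⁻¹) ((-1) ^ k * k.factorial) (-k) := by
  have hderiv : HasDerivAt (fun z ↦ (Complex.Gamma z)⁻¹)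
      (((-1) ^ k * k.factorial : ℝ) : ℂ) ((-k : ℝ) : ℂ) := by
    push_cast
    rw [← deriv_complexGamma_inv_neg_nat]
    exact (Complex.differentiable_one_div_Gamma _).hasDerivAt
  simpa only [Complex.Gamma_ofReal, ← Complex.ofReal_inv, Complex.ofReal_re] using
    hderiv.real_of_complex

section Mellin

variable {E : Type*} [NormedAddCommGroup E] [NormedSpace ℝ E] {f : ℝ → E}

lemma rpow_le_rpow_add_rpow {x p q r : ℝ} (hx : 0 < x) (hpq : p ≤ q) (hqr : q ≤ r) :
    x ^ q ≤ x ^ p + x ^ r := by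
  rcases le_total 1 x with h1 | h1
  · exact (rpow_le_rpow_of_exponent_le h1 hqr).trans (le_add_of_nonneg_left (by positivity))
  · exact (rpow_le_rpow_of_exponent_ge hx h1 hpq).trans (le_add_of_nonneg_right (by positivity))

lemma norm_rpow_smul_le {x p q r : ℝ} (hx : 0 < x) (hpq : p ≤ q) (hqr : q ≤ r) (v : E) :
    ‖x ^ q • v‖ ≤ ‖x ^ p • v‖ + ‖x ^ r • v‖ := by
  simp only [norm_smul, norm_of_nonneg (rpow_nonneg hx.le _), ← add_mul]
  gcongr
  exact rpow_le_rpow_add_rpow hx hpq hqr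

lemma continuousAt_integral_rpow_smul {μ : Measure ℝ} (hμ : ∀ᵐ x ∂μ, 0 < x) {p q r : ℝ}
    (hpq : p < q) (hqr : q < r) (hf : AEStronglyMeasurable f μ)
    (hp : Integrable (fun x ↦ x ^ p • f x) μ) (hr : Integrable (fun x ↦ x ^ r • f x) μ) :
    ContinuousAt (fun s : ℝ ↦ ∫ x, x ^ s • f x ∂μ) q := by
  refine continuousAt_of_dominated (.of_forall fun s ↦ ?_) ?_ (hp.norm.add hr.norm) ?_
  · exact (measurable_id.pow_const s).aestronglyMeasurable.smul hf
  · filter_upwards [Ioo_mem_nhds hpq hqr] with s hs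
    filter_upwards [hμ] with x hx using norm_rpow_smul_le hx hs.1.le hs.2.le (f x)
  · filter_upwards [hμ] with x hx using (continuousAt_const_rpow hx.ne').smul continuousAt_const

lemma integrableOn_rpow_smul_of_isBigO {c a q : ℝ} (hc : 0 < c)
    (hf : LocallyIntegrableOn f (Ici c)) (hfa : f =O[atTop] (· ^ a)) (hqa : q + a < -1) :
    IntegrableOn (fun x ↦ x ^ q • f x) (Ici c) := by
  have hpow : ContinuousOn (fun x : ℝ ↦ x ^ q) (Ici c) := fun x hx ↦
    (continuousAt_rpow_const x q (.inl (hc.trans_le hx).ne')).continuousWithinAt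
  have hO : (fun x ↦ x ^ q • f x) =O[atTop] (· ^ (q + a)) := by
    refine ((isBigO_refl (fun x : ℝ ↦ x ^ q) atTop).smul hfa).congr' .rfl ?_
    filter_upwards [eventually_gt_atTop 0] with x hx using (rpow_add hx q a).symm
  exact (hf.continuousOn_smul isClosed_Ici.isLocallyClosed hpow).integrableOn_of_isBigO_atTop hO
    (integrableAtFilter_rpow_atTop_iff.mpr hqa)

end Mellin

/-- The Fermi–Dirac distribution with reduced chemical potential `η`, the weight in the incomplete
Fermi–Dirac integral. -/
noncomputable def fermiDirac (η x : ℝ) : ℝ := 1 / (exp (x - η) + 1)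

lemma continuous_fermiDirac (η : ℝ) : Continuous (fermiDirac η) := by
  unfold fermiDirac
  exact continuous_const.div (by fun_prop) fun x ↦ by positivity

lemma norm_fermiDirac_le (η x : ℝ) : ‖fermiDirac η x‖ ≤ exp η * exp (-x) := by
  rw [fermiDirac, norm_of_nonneg (by positivity), ← exp_add, ← sub_eq_add_neg, ← neg_sub x η,
    exp_neg, ← one_div]
  gcongr
  exact le_add_of_nonneg_right zero_le_one

lemma fermiDirac_isBigO_rpow (η a : ℝ) : fermiDirac η =O[atTop] (· ^ a : ℝ → ℝ) := by
  have hexp : fermiDirac η =O[atTop] fun x ↦ exp (-x) :=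
    .of_bound (exp η) <| .of_forall fun x ↦ by
      simpa only [norm_of_nonneg (exp_pos _).le] using norm_fermiDirac_le η x
  exact hexp.trans <| by
    simpa only [neg_one_mul] using (isLittleO_exp_neg_mul_rpow_atTop one_pos a).isBigO

theorem stmt19_general {E : Type*} [NormedAddCommGroup E] [NormedSpace ℝ E] {f : ℝ → E} {c : ℝ}
    (hc : 0 < c) (hf : LocallyIntegrableOn f (Ici c)) (hdecay : ∀ a : ℝ, f =O[atTop] (· ^ a))
    (k : ℕ) :
    (∀ q : ℝ, IntegrableOn (fun x ↦ x ^ q • f x) (Ioi c)) ∧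
    HasDerivAt (fun q : ℝ ↦ (1 / Gamma (q + 1)) • ∫ x in Ioi c, x ^ q • f x)
      (((-1 : ℝ) ^ k * k.factorial) • ∫ x in Ioi c, x ^ (-(k : ℝ) - 1) • f x)
      (-(k : ℝ) - 1) := by
  have hint (q : ℝ) : IntegrableOn (fun x ↦ x ^ q • f x) (Ioi c) :=
    (integrableOn_rpow_smul_of_isBigO hc hf (hdecay (-q - 2)) (by linarith)).mono_set
      Ioi_subset_Ici_self
  have hpos : ∀ᵐ x ∂volume.restrict (Ioi c), 0 < x :=
    (ae_restrict_mem measurableSet_Ioi).mono fun x hx ↦ hc.trans hx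
  have hcont : ContinuousAt (fun q : ℝ ↦ ∫ x in Ioi c, x ^ q • f x) (-(k : ℝ) - 1) :=
    continuousAt_integral_rpow_smul hpos (sub_one_lt _) (lt_add_one _)
      (hf.aestronglyMeasurable.mono_set Ioi_subset_Ici_self) (hint _) (hint _)
  have hk : -(k : ℝ) - 1 + 1 = -k := sub_add_cancel _ _
  have hGamma : HasDerivAt (fun q : ℝ ↦ 1 / Gamma (q + 1)) ((-1) ^ k * k.factorial)
      (-(k : ℝ) - 1) := by
    simpa only [one_div] using
      HasDerivAt.comp_add_const _ 1 (hk ▸ hasDerivAt_realGamma_inv_neg_nat k)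
  refine ⟨hint, hasDerivAt_smul_of_eq_zero hGamma ?_ hcont⟩
  rw [hk, Gamma_neg_nat_eq_zero, div_zero]

theorem stmt19 (η : ℝ) (k : ℕ) :
    (∀ q : ℝ, IntegrableOn (fun x : ℝ => x ^ q / (Real.exp (x - η) + 1)) (Ioi 1)) ∧
    HasDerivAt
      (fun q : ℝ => (1 / Real.Gamma (q + 1)) *
        ∫ x in Ioi (1 : ℝ), x ^ q / (Real.exp (x - η) + 1))
      ((-1 : ℝ) ^ k * k.factorial *
        ∫ x in Ioi (1 : ℝ), x ^ (-(k : ℝ) - 1) / (Real.exp (x - η) + 1))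
      (-(k : ℝ) - 1) := by
  simpa only [smul_eq_mul, fermiDirac, mul_one_div] using
    stmt19_general one_pos ((continuous_fermiDirac η).locallyIntegrable.locallyIntegrableOn _)
      (fermiDirac_isBigO_rpow η) k
end
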